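/- arXiv:1509.01691 — 11 statements merged into one kernel-verified Lean document; each statement's English description precedes it below -/
import Mathlib

section
/- Let (X,d) be a complete metric space and let σ be a conical geodesic bicombing on X that has the midpoint property. Let Σ be a subsemigroup of the isometry group of X such that every element of Σ is σ-equivariant. If there is a non-empty compact subset K ⊆ X with s(K) = K for every s ∈ Σ, then there exists a point x⋆ in cl conv_σ(K) such that s(x⋆) = x⋆ for every s ∈ Σ. -/
open Set

/-- A conical geodesic bicombing on a metric space. -/
def IsConicalBicombing {X : Type*} [MetricSpace X] (σ : X → X → ℝ → X) : Prop :=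
  (∀ x y : X, σ x y 0 = x) ∧ (∀ x y : X, σ x y 1 = y) ∧
  (∀ x y : X, ∀ s ∈ Icc (0:ℝ) 1, ∀ t ∈ Icc (0:ℝ) 1,
    dist (σ x y s) (σ x y t) = |s - t| * dist x y) ∧
  (∀ x x' y y' : X, ∀ t ∈ Icc (0:ℝ) 1,
    dist (σ x y t) (σ x' y' t) ≤ (1 - t) * dist x x' + t * dist y y')

/-- The midpoint property of a bicombing. -/
def MidpointProp {X : Type*} [MetricSpace X] (σ : X → X → ℝ → X) : Prop :=
  ∀ x y : X, σ x y (1/2) = σ y x (1/2)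

/-- A self-map is `σ`-equivariant. -/
def SigmaEquivariant {X : Type*} [MetricSpace X] (σ : X → X → ℝ → X) (φ : X → X) : Prop :=
  ∀ x y : X, ∀ t ∈ Icc (0:ℝ) 1, φ (σ x y t) = σ (φ x) (φ y) t

/-- The sets `A_k` in the inductive construction of the `σ`-convex hull. -/
def convSigmaSets {X : Type*} [MetricSpace X] (σ : X → X → ℝ → X) (A : Set X) : ℕ → Set X
  | 0 => A
  | k + 1 => {z | ∃ x ∈ convSigmaSets σ A k, ∃ y ∈ convSigmaSets σ A k,
      ∃ t ∈ Icc (0:ℝ) 1, z = σ x y t}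

/-- The `σ`-convex hull of a set. -/
def convSigma {X : Type*} [MetricSpace X] (σ : X → X → ℝ → X) (A : Set X) : Set X :=
  ⋃ k : ℕ, convSigmaSets σ A k

structure IsBary {X : Type*} [MetricSpace X] (m : X → X → X) (n : ℕ)
    (b : (Fin n → X) → X) : Prop where
  symm : ∀ (x : Fin n → X) (p : Equiv.Perm (Fin n)), b (x ∘ p) = b x
  lip : ∀ x y : Fin n → X, (n : ℝ) * dist (b x) (b y) ≤ ∑ i, dist (x i) (y i)
  equi : ∀ f : X → X, Isometry f → (∀ x y, f (m x y) = m (f x) (f y)) →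
    ∀ x : Fin n → X, f (b x) = b (f ∘ x)
  conv : ∀ C : Set X, IsClosed C → (∀ x ∈ C, ∀ y ∈ C, m x y ∈ C) →
    ∀ x : Fin n → X, (∀ i, x i ∈ C) → b x ∈ C

theorem isBary_one {X : Type*} [MetricSpace X] (m : X → X → X) :
    IsBary m 1 (fun x => x 0) where
  symm x p := by simp [Subsingleton.elim (p 0) 0]
  lip x y := by simp
  equi f _ _ x := rfl
  conv C _ _ x hx := hx 0

theorem isBary_two {X : Type*} [MetricSpace X] (m : X → X → X)
    (hs : ∀ x y, m x y = m y x)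
    (hl : ∀ x y x' y', dist (m x y) (m x' y') ≤ (dist x x' + dist y y') / 2) :
    IsBary m 2 (fun x => m (x 0) (x 1)) where
  symm x p := by
    have h : (p 0 = 0 ∧ p 1 = 1) ∨ (p 0 = 1 ∧ p 1 = 0) := by
      revert p; decide
    rcases h with ⟨h0, h1⟩ | ⟨h0, h1⟩
    · simp [h0, h1]
    · simp [h0, h1, hs (x 1)]
  lip x y := by
    have := hl (x 0) (x 1) (y 0) (y 1)
    simp only [Fin.sum_univ_two]
    push_cast
    linarith
  equi f _ hf x := hf _ _
  conv C _ hC x hx := hC _ (hx 0) _ (hx 1)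

theorem ball_mid {X : Type*} [MetricSpace X] (m : X → X → X)
    (hi : ∀ x, m x x = x)
    (hl : ∀ x y x' y', dist (m x y) (m x' y') ≤ (dist x x' + dist y y') / 2)
    (p : X) (r : ℝ) : ∀ x ∈ Metric.closedBall p r, ∀ y ∈ Metric.closedBall p r,
      m x y ∈ Metric.closedBall p r := by
  intro x hx y hy
  rw [Metric.mem_closedBall] at *
  have := hl x y p p
  rw [hi p] at this
  linarith

theorem isBary_succ {X : Type*} [MetricSpace X] [CompleteSpace X] (m : X → X → X)
    (hi : ∀ x, m x x = x)
    (hl : ∀ x y x' y', dist (m x y) (m x' y') ≤ (dist x x' + dist y y') / 2)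
    (n : ℕ) (hn : 2 ≤ n) (b : (Fin n → X) → X) (hb : IsBary m n b) :
    ∃ b', IsBary m (n + 1) b' := by
  have hn2 : (2 : ℝ) ≤ n := by exact_mod_cast hn
  let T : (Fin (n+1) → X) → (Fin (n+1) → X) := fun x i => b (x ∘ i.succAbove)
  have Tperm : ∀ (x : Fin (n+1) → X) (p : Equiv.Perm (Fin (n+1))), T (x ∘ p) = T x ∘ p := by
    intro x p
    funext i
    let q : Equiv.Perm (Fin n) :=
      ((finSuccAboveEquiv i).trans
        (p.subtypeEquiv (p := fun a => a ≠ i) (q := fun a => a ≠ p i)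
          (fun a => by simp))).trans (finSuccAboveEquiv (p i)).symm
    have hq : ∀ k, (p i).succAbove (q k) = p (i.succAbove k) := by
      intro k
      have : finSuccAboveEquiv (p i) (q k) = ⟨p (i.succAbove k), by
          simp [Fin.succAbove_ne]⟩ := by
        simp only [q, Equiv.trans_apply]
        exact (finSuccAboveEquiv (p i)).apply_symm_apply _
      exact congrArg Subtype.val this
    change b ((x ∘ p) ∘ i.succAbove) = b (x ∘ (p i).succAbove)
    rw [← hb.symm (x ∘ (p i).succAbove) q]
    congr 1
    funext k
    simp [hq]
  have Tdist : ∀ (x : Fin (n+1) → X) i j, dist (T x i) (T x j) ≤ dist (x i) (x j) / 2 := by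
    intro x i j
    by_cases hij : i = j
    · subst hij; simp
    have h1 : T x j = T (x ∘ Equiv.swap i j) i := by rw [Tperm]; simp
    rw [h1]
    have h2 := hb.lip (x ∘ i.succAbove) ((x ∘ Equiv.swap i j) ∘ i.succAbove)
    have h3 : ∑ k, dist ((x ∘ i.succAbove) k) (((x ∘ Equiv.swap i j) ∘ i.succAbove) k)
        = dist (x i) (x j) := by
      obtain ⟨k, rfl⟩ := Fin.exists_succAbove_eq (Ne.symm hij)
      rw [Finset.sum_eq_single k]
      · simp [dist_comm]
      · intro l _ hl
        have : Equiv.swap i (i.succAbove k) (i.succAbove l) = i.succAbove l :=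
          Equiv.swap_apply_of_ne_of_ne (Fin.succAbove_ne _ _)
            (fun h => hl (Fin.succAbove_right_injective h))
        simp [this]
      · simp
    rw [h3] at h2
    change dist (b _) (b _) ≤ _
    have := @dist_nonneg _ _ (b (x ∘ i.succAbove)) (b ((x ∘ Equiv.swap i j) ∘ i.succAbove))
    nlinarith
  have Tmem : ∀ C : Set X, IsClosed C → (∀ x ∈ C, ∀ y ∈ C, m x y ∈ C) →
      ∀ x : Fin (n+1) → X, (∀ i, x i ∈ C) → ∀ i, T x i ∈ C :=
    fun C hC hm x hx i => hb.conv C hC hm _ (fun k => hx _)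
  have Tlip : ∀ x y : Fin (n+1) → X, ∑ i, dist (T x i) (T y i) ≤ ∑ i, dist (x i) (y i) := by
    intro x y
    have h1 : ∀ i, (n:ℝ) * dist (T x i) (T y i) ≤
        (∑ j, dist (x j) (y j)) - dist (x i) (y i) := by
      intro i
      have := hb.lip (x ∘ i.succAbove) (y ∘ i.succAbove)
      rw [Fin.sum_univ_succAbove (fun j => dist (x j) (y j)) i]
      simp only [Function.comp_apply] at this
      change (n:ℝ) * dist (b _) (b _) ≤ _
      linarith
    have h2 := Finset.sum_le_sum (s := Finset.univ) (fun i _ => h1 i)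
    rw [← Finset.mul_sum, Finset.sum_sub_distrib] at h2
    simp only [Finset.sum_const, Finset.card_univ, Fintype.card_fin, nsmul_eq_mul] at h2
    push_cast at h2
    have h3 : (n:ℝ) * (∑ i, dist (T x i) (T y i)) ≤ n * ∑ i, dist (x i) (y i) := by linarith
    exact le_of_mul_le_mul_left h3 (by linarith)
  have Tequi : ∀ f : X → X, Isometry f → (∀ x y, f (m x y) = m (f x) (f y)) →
      ∀ x : Fin (n+1) → X, f ∘ T x = T (f ∘ x) := by
    intro f hf hm x
    funext i
    exact hb.equi f hf hm _
  -- iterates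
  have Iperm : ∀ (k : ℕ) (x : Fin (n+1) → X) (p : Equiv.Perm (Fin (n+1))),
      T^[k] (x ∘ p) = T^[k] x ∘ p := by
    intro k
    induction k with
    | zero => intros; rfl
    | succ k ih => intro x p; rw [Function.iterate_succ_apply, Tperm, ih]; rfl
  have Imem : ∀ C : Set X, IsClosed C → (∀ x ∈ C, ∀ y ∈ C, m x y ∈ C) →
      ∀ (k : ℕ) (x : Fin (n+1) → X), (∀ i, x i ∈ C) → ∀ i, T^[k] x i ∈ C := by
    intro C hC hm k
    induction k with
    | zero => intro x hx; exact hx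
    | succ k ih => intro x hx; exact ih _ (Tmem C hC hm x hx)
  have Ilip : ∀ (k : ℕ) (x y : Fin (n+1) → X),
      ∑ i, dist (T^[k] x i) (T^[k] y i) ≤ ∑ i, dist (x i) (y i) := by
    intro k
    induction k with
    | zero => intro x y; exact le_rfl
    | succ k ih => intro x y; exact (ih _ _).trans (Tlip x y)
  have Iequi : ∀ f : X → X, Isometry f → (∀ x y, f (m x y) = m (f x) (f y)) →
      ∀ (k : ℕ) (x : Fin (n+1) → X), f ∘ T^[k] x = T^[k] (f ∘ x) := by
    intro f hf hm k
    induction k with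
    | zero => intro x; rfl
    | succ k ih =>
      intro x
      rw [Function.iterate_succ_apply, Function.iterate_succ_apply, ih, Tequi f hf hm]
  have Idist : ∀ (x : Fin (n+1) → X) (k : ℕ) i j,
      dist (T^[k] x i) (T^[k] x j) ≤ dist (x i) (x j) / 2 ^ k := by
    intro x k i j
    induction k with
    | zero => simp
    | succ k ih =>
      rw [Function.iterate_succ_apply']
      refine (Tdist _ i j).trans ?_
      rw [pow_succ, ← div_div]
      linarith
  have hlim : ∀ x : Fin (n+1) → X, ∃ z, ∀ i,
      Filter.Tendsto (fun k => T^[k] x i) Filter.atTop (nhds z) := by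
    intro x
    let D := ∑ j, dist (x j) (x 0) + ∑ j, dist (x j) (x 0)
    have hD : ∀ i j, dist (x i) (x j) ≤ D := by
      intro i j
      have h1 := Finset.single_le_sum (f := fun j => dist (x j) (x 0))
        (fun _ _ => dist_nonneg) (Finset.mem_univ i)
      have h2 := Finset.single_le_sum (f := fun j => dist (x j) (x 0))
        (fun _ _ => dist_nonneg) (Finset.mem_univ j)
      have := dist_triangle_right (x i) (x j) (x 0)
      simp only [D]
      linarith
    have hc : CauchySeq (fun k => T^[k] x 0) := by
      refine cauchySeq_of_le_geometric_two (C := 2 * D) ?_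
      intro k
      have h := Tmem (Metric.closedBall (T^[k] x 0) (D / 2 ^ k)) Metric.isClosed_closedBall
        (ball_mid m hi hl _ _) (T^[k] x) (fun i => by
          rw [Metric.mem_closedBall]
          refine (Idist x k i 0).trans ?_
          gcongr
          exact hD _ _) 0
      rw [Metric.mem_closedBall, dist_comm] at h
      rw [Function.iterate_succ_apply']
      simpa using h
    obtain ⟨z, hz⟩ := cauchySeq_tendsto_of_complete hc
    refine ⟨z, fun i => ?_⟩
    refine hz.congr_dist ?_
    have h0 : Filter.Tendsto (fun k : ℕ => dist (x 0) (x i) / 2 ^ k) Filter.atTop (nhds 0) :=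
      tendsto_const_nhds.div_atTop (tendsto_pow_atTop_atTop_of_one_lt one_lt_two)
    exact squeeze_zero (fun _ => dist_nonneg) (fun k => Idist x k 0 i) h0
  choose L hL using hlim
  refine ⟨L, ?_, ?_, ?_, ?_⟩
  · intro x p
    refine tendsto_nhds_unique (hL (x ∘ p) 0) ?_
    simp only [Iperm]
    exact hL x (p 0)
  · intro x y
    have h : Filter.Tendsto (fun k => ∑ i, dist (T^[k] x i) (T^[k] y i)) Filter.atTop
        (nhds (∑ _i : Fin (n+1), dist (L x) (L y))) :=
      tendsto_finsetSum _ (fun i _ => (hL x i).dist (hL y i))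
    have := le_of_tendsto' h (fun k => Ilip k x y)
    simpa using this
  · intro f hf hm x
    refine tendsto_nhds_unique ((hf.continuous.tendsto _).comp (hL x 0)) ?_
    refine (hL (f ∘ x) 0).congr (fun k => ?_)
    rw [← Iequi f hf hm]; rfl
  · intro C hC hm x hx
    exact hC.mem_of_tendsto (hL x 0) (Filter.Eventually.of_forall (fun k => Imem C hC hm k x hx 0))

theorem exists_isBary {X : Type*} [MetricSpace X] [CompleteSpace X] (m : X → X → X)
    (hi : ∀ x, m x x = x) (hs : ∀ x y, m x y = m y x)
    (hl : ∀ x y x' y', dist (m x y) (m x' y') ≤ (dist x x' + dist y y') / 2)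
    (n : ℕ) (hn : 1 ≤ n) : ∃ b, IsBary m n b := by
  rcases Nat.lt_or_ge n 2 with h | h
  · obtain rfl : n = 1 := by omega
    exact ⟨_, isBary_one m⟩
  · induction n, h using Nat.le_induction with
    | base => exact ⟨_, isBary_two m hs hl⟩
    | succ n h ih =>
      obtain ⟨b, hb⟩ := ih (by omega)
      exact isBary_succ m hi hl n h b hb

theorem exists_max_sep {X : Type*} [MetricSpace X] (K : Set X) (hK : IsCompact K)
    (ε : ℝ) (hε : 0 < ε) : ∃ (n : ℕ) (x : Fin n → X), (∀ i, x i ∈ K) ∧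
      (∀ i j, i ≠ j → ε < dist (x i) (x j)) ∧
      ∀ F : Finset X, (↑F ⊆ K) → (∀ a ∈ F, ∀ c ∈ F, a ≠ c → ε < dist a c) → F.card ≤ n := by
  classical
  obtain ⟨t, -, htf, ht⟩ := hK.finite_cover_balls (e := ε / 2) (by linarith)
  let A : Set ℕ := {n | ∃ F : Finset X, (↑F ⊆ K) ∧
    (∀ a ∈ F, ∀ c ∈ F, a ≠ c → ε < dist a c) ∧ F.card = n}
  have hbdd : BddAbove A := by
    refine ⟨htf.toFinset.card, ?_⟩
    rintro _ ⟨F, hF, hs, rfl⟩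
    have : ∀ a : X, ∃ c, a ∈ F → c ∈ t ∧ dist a c < ε / 2 := by
      intro a
      by_cases ha : a ∈ F
      · have := ht (hF ha)
        simp only [Set.mem_iUnion, Metric.mem_ball] at this
        obtain ⟨c, hc, h⟩ := this
        exact ⟨c, fun _ => ⟨hc, h⟩⟩
      · exact ⟨a, fun h => absurd h ha⟩
    choose g hg using this
    refine Finset.card_le_card_of_injOn g (fun a ha => by simpa using (hg a ha).1) ?_
    intro a ha c hc hac
    by_contra hne
    have h1 := hs a ha c hc hne
    have h2 := (hg a ha).2
    have h3 := (hg c hc).2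
    rw [hac] at h2
    have := dist_triangle_right a c (g c)
    linarith
  have hmem := Nat.sSup_mem (s := A) ⟨0, ∅, by simp, by simp, rfl⟩ hbdd
  obtain ⟨F, hF, hs, hc⟩ := hmem
  refine ⟨sSup A, fun i => (F.equivFinOfCardEq hc).symm i, fun i => hF (Subtype.prop _), ?_, ?_⟩
  · intro i j hij
    refine hs _ (Subtype.prop _) _ (Subtype.prop _) ?_
    intro h
    exact hij ((F.equivFinOfCardEq hc).symm.injective (Subtype.ext h))
  · intro G hG hsG
    exact le_csSup hbdd ⟨G, hG, hsG, rfl⟩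

theorem exists_perm_near {X : Type*} [MetricSpace X] (K : Set X)
    (ε : ℝ) (hε : 0 < ε) (n : ℕ) (x : Fin n → X) (hx : ∀ i, x i ∈ K)
    (hsep : ∀ i j, i ≠ j → ε < dist (x i) (x j))
    (hmax : ∀ F : Finset X, (↑F ⊆ K) → (∀ a ∈ F, ∀ c ∈ F, a ≠ c → ε < dist a c) → F.card ≤ n)
    (s : X → X) (hs : Isometry s) (hsK : ∀ a ∈ K, s a ∈ K) :
    ∃ p : Equiv.Perm (Fin n), ∀ i, dist (s (x i)) (x (p i)) ≤ ε := by
  classical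
  let t : Fin n → Finset (Fin n) := fun i => Finset.univ.filter (fun j => dist (s (x i)) (x j) ≤ ε)
  have hinj : Function.Injective x := by
    intro i j h
    by_contra hne
    have := hsep i j hne
    rw [h, dist_self] at this
    linarith
  have hall : ∀ I : Finset (Fin n), I.card ≤ (I.biUnion t).card := by
    intro I
    set N := I.biUnion t with hN
    have hfar : ∀ j ∈ Nᶜ, ∀ i ∈ I, ε < dist (s (x i)) (x j) := by
      intro j hj i hi
      by_contra hle
      rw [Finset.mem_compl] at hj
      exact hj (Finset.mem_biUnion.2 ⟨i, hi, by simpa [t] using hle⟩)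
    have hd : Disjoint (Nᶜ.image x) (I.image (s ∘ x)) := by
      rw [Finset.disjoint_left]
      intro a ha hb
      obtain ⟨j, hj, rfl⟩ := Finset.mem_image.1 ha
      obtain ⟨i, hi, h⟩ := Finset.mem_image.1 hb
      have := hfar j hj i hi
      rw [Function.comp_apply] at h
      rw [h, dist_self] at this
      linarith
    have h := hmax (Nᶜ.image x ∪ I.image (s ∘ x)) ?_ ?_
    · rw [Finset.card_union_of_disjoint hd, Finset.card_image_of_injective _ hinj,
        Finset.card_image_of_injective _ (hs.injective.comp hinj), Finset.card_compl,
        Fintype.card_fin] at h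
      have := Finset.card_le_univ N
      rw [Fintype.card_fin] at this
      omega
    · intro a ha
      rcases Finset.mem_union.1 (Finset.mem_coe.1 ha) with ha | ha
      · obtain ⟨j, hj, rfl⟩ := Finset.mem_image.1 ha
        exact hx j
      · obtain ⟨j, hj, rfl⟩ := Finset.mem_image.1 ha
        exact hsK _ (hx j)
    · intro a ha c hc hac
      rcases Finset.mem_union.1 ha with ha | ha <;> rcases Finset.mem_union.1 hc with hc | hc <;>
      obtain ⟨i, hi, rfl⟩ := Finset.mem_image.1 ha <;>
      obtain ⟨j, hj, rfl⟩ := Finset.mem_image.1 hc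
      · exact hsep i j (fun h => hac (by rw [h]))
      · rw [dist_comm]; exact hfar i hi j hj
      · exact hfar j hj i hi
      · simp only [Function.comp_apply, hs.dist_eq]
        exact hsep i j (fun h => hac (by rw [h]))
  obtain ⟨f, hf, hft⟩ := (Finset.all_card_le_biUnion_card_iff_exists_injective t).1 hall
  refine ⟨Equiv.ofBijective f (Finite.injective_iff_bijective.1 hf), fun i => ?_⟩
  simpa [t] using hft i

theorem shrink_step {X : Type*} [MetricSpace X] [CompleteSpace X] (m : X → X → X)
    (hi : ∀ x, m x x = x) (hs : ∀ x y, m x y = m y x)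
    (hl : ∀ x y x' y', dist (m x y) (m x' y') ≤ (dist x x' + dist y y') / 2)
    (S : Set (X → X)) (hiso : ∀ s ∈ S, Isometry s)
    (hcomp : ∀ s ∈ S, ∀ t ∈ S, s ∘ t ∈ S)
    (heq : ∀ s ∈ S, ∀ x y, s (m x y) = m (s x) (s y))
    (K : Set X) (hK : IsCompact K) (hKne : K.Nonempty) (hinv : ∀ s ∈ S, ∀ a ∈ K, s a ∈ K)
    (ε : ℝ) (hε : 0 < ε) :
    ∃ (y : X) (K' : Set X), y ∈ K' ∧ IsCompact K' ∧ (∀ s ∈ S, ∀ a ∈ K', s a ∈ K') ∧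
      K' ⊆ Metric.closedBall y ε ∧
      ∀ C : Set X, IsClosed C → (∀ x ∈ C, ∀ y ∈ C, m x y ∈ C) → K ⊆ C → K' ⊆ C := by
  obtain ⟨n, x, hx, hsep, hmax⟩ := exists_max_sep K hK ε hε
  have hn : 1 ≤ n := by
    obtain ⟨a, ha⟩ := hKne
    have := hmax {a} (by simpa using ha) (by simp)
    simpa using this
  have hn' : (0:ℝ) < n := by exact_mod_cast hn
  obtain ⟨b, hb⟩ := exists_isBary m hi hs hl n hn
  have hbc : Continuous b := by
    have : LipschitzWith 1 b := by
      refine LipschitzWith.of_dist_le_mul (fun u v => ?_)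
      have h1 := hb.lip u v
      have h2 : ∑ i, dist (u i) (v i) ≤ ∑ _i : Fin n, dist u v :=
        Finset.sum_le_sum (fun i _ => dist_le_pi_dist u v i)
      simp only [Finset.sum_const, Finset.card_univ, Fintype.card_fin, nsmul_eq_mul] at h2
      have := le_of_mul_le_mul_left (h1.trans h2) hn'
      simpa using this
    exact this.continuous
  let P : Set X := b '' (Set.univ.pi (fun _ => K))
  have hP : IsCompact P := (isCompact_univ_pi (fun _ => hK)).image hbc
  let O : Set X := insert (b x) {z | ∃ s ∈ S, z = s (b x)}
  have hOP : O ⊆ P := by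
    rintro z (rfl | ⟨s, hsS, rfl⟩)
    · exact ⟨x, fun i _ => hx i, rfl⟩
    · exact ⟨s ∘ x, fun i _ => hinv s hsS _ (hx i), (hb.equi s (hiso s hsS) (heq s hsS) x).symm⟩
  have hcl : closure O ⊆ P := closure_minimal hOP hP.isClosed
  refine ⟨b x, closure O, subset_closure (Set.mem_insert _ _),
    hP.of_isClosed_subset isClosed_closure hcl, ?_, ?_, ?_⟩
  · intro s hsS a ha
    refine map_mem_closure (hiso s hsS).continuous ha ?_
    rintro z (rfl | ⟨t, htS, rfl⟩)
    · exact Or.inr ⟨s, hsS, rfl⟩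
    · exact Or.inr ⟨s ∘ t, hcomp s hsS t htS, rfl⟩
  · refine closure_minimal ?_ Metric.isClosed_closedBall
    rintro z (rfl | ⟨s, hsS, rfl⟩)
    · exact Metric.mem_closedBall_self hε.le
    · obtain ⟨p, hp⟩ := exists_perm_near K ε hε n x hx hsep hmax s (hiso s hsS) (hinv s hsS)
      rw [Metric.mem_closedBall, hb.equi s (hiso s hsS) (heq s hsS) x, ← hb.symm x p]
      have h1 := hb.lip (s ∘ x) (x ∘ p)
      have h2 : ∑ i, dist ((s ∘ x) i) ((x ∘ p) i) ≤ ∑ _i : Fin n, ε :=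
        Finset.sum_le_sum (fun i _ => hp i)
      simp only [Finset.sum_const, Finset.card_univ, Fintype.card_fin, nsmul_eq_mul] at h2
      exact le_of_mul_le_mul_left (h1.trans h2) hn'
  · intro C hC hm hKC
    refine hcl.trans ?_
    rintro z ⟨u, hu, rfl⟩
    exact hb.conv C hC hm u (fun i => hKC (hu i (Set.mem_univ i)))

theorem fixed_mid {X : Type*} [MetricSpace X] [CompleteSpace X] (m : X → X → X)
    (hi : ∀ x, m x x = x) (hs : ∀ x y, m x y = m y x)
    (hl : ∀ x y x' y', dist (m x y) (m x' y') ≤ (dist x x' + dist y y') / 2)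
    (S : Set (X → X)) (hiso : ∀ s ∈ S, Isometry s)
    (hcomp : ∀ s ∈ S, ∀ t ∈ S, s ∘ t ∈ S)
    (heq : ∀ s ∈ S, ∀ x y, s (m x y) = m (s x) (s y))
    (K : Set X) (hK : IsCompact K) (hKne : K.Nonempty) (hinv : ∀ s ∈ S, ∀ a ∈ K, s a ∈ K)
    (C : Set X) (hC : IsClosed C) (hm : ∀ x ∈ C, ∀ y ∈ C, m x y ∈ C) (hKC : K ⊆ C) :
    ∃ z ∈ C, ∀ s ∈ S, s z = z := by
  let Q := {L : Set X // IsCompact L ∧ L.Nonempty ∧ (∀ s ∈ S, ∀ a ∈ L, s a ∈ L) ∧ L ⊆ C}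
  have step : ∀ (k : ℕ) (L : Q), ∃ (y : X) (L' : Q), y ∈ L'.1 ∧
      L'.1 ⊆ Metric.closedBall y (1 / 2 / 2 ^ k) ∧
      ∀ C : Set X, IsClosed C → (∀ x ∈ C, ∀ y ∈ C, m x y ∈ C) → L.1 ⊆ C → L'.1 ⊆ C := by
    intro k L
    obtain ⟨y, K', h1, h2, h3, h4, h5⟩ := shrink_step m hi hs hl S hiso hcomp heq L.1 L.2.1 L.2.2.1
      L.2.2.2.1 (1 / 2 / 2 ^ k) (by positivity)
    exact ⟨y, ⟨K', h2, ⟨y, h1⟩, h3, h5 C hC hm L.2.2.2.2⟩, h1, h4, h5⟩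
  choose y N h1 h2 h3 using step
  let Ks : ℕ → Q := fun k => Nat.rec ⟨K, hK, hKne, hinv, hKC⟩ (fun k L => N k L) k
  have hKs : ∀ k, Ks (k+1) = N k (Ks k) := fun k => rfl
  let w : ℕ → X := fun k => y k (Ks k)
  have hw : ∀ k, w k ∈ (Ks (k+1)).1 := fun k => h1 k _
  have hb : ∀ k, (Ks (k+1)).1 ⊆ Metric.closedBall (w k) (1 / 2 / 2 ^ k) := fun k => h2 k _
  have hc : CauchySeq w := by
    refine cauchySeq_of_le_geometric_two (C := 1) (fun k => ?_)
    have := h3 (k+1) (Ks (k+1)) _ Metric.isClosed_closedBall (ball_mid m hi hl _ _) (hb k)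
      (hw (k+1))
    rwa [Metric.mem_closedBall, dist_comm] at this
  obtain ⟨z, hz⟩ := cauchySeq_tendsto_of_complete hc
  refine ⟨z, hC.mem_of_tendsto hz (Filter.Eventually.of_forall
    (fun k => (Ks (k+1)).2.2.2.2 (hw k))), fun s hsS => ?_⟩
  refine tendsto_nhds_unique (((hiso s hsS).continuous.tendsto z).comp hz) ?_
  refine hz.congr_dist ?_
  have h0 : Filter.Tendsto (fun k : ℕ => (1:ℝ) / 2 / 2 ^ k) Filter.atTop (nhds 0) :=
    tendsto_const_nhds.div_atTop (tendsto_pow_atTop_atTop_of_one_lt one_lt_two)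
  refine squeeze_zero (fun _ => dist_nonneg) (fun k => ?_) h0
  have := hb k ((Ks (k+1)).2.2.2.1 s hsS _ (hw k))
  rwa [Metric.mem_closedBall, dist_comm] at this

theorem fixed_point_of_equivariant_semigroup_with_invariant_compact
    {X : Type*} [MetricSpace X] [CompleteSpace X]
    (σ : X → X → ℝ → X) (hσ : IsConicalBicombing σ) (hmid : MidpointProp σ)
    (S : Set (X → X))
    (hiso : ∀ s ∈ S, Isometry s ∧ Function.Surjective s)
    (hcomp : ∀ s ∈ S, ∀ t ∈ S, s ∘ t ∈ S)
    (hequiv : ∀ s ∈ S, SigmaEquivariant σ s)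
    (K : Set X) (hK : IsCompact K) (hKne : K.Nonempty)
    (hinv : ∀ s ∈ S, s '' K = K) :
    ∃ xs ∈ closure (convSigma σ K), ∀ s ∈ S, s xs = xs := by
  obtain ⟨h0, h1, hg, hcon⟩ := hσ
  have hhalf : (1/2 : ℝ) ∈ Icc (0:ℝ) 1 := by constructor <;> norm_num
  have hl : ∀ x y x' y', dist (σ x y (1/2)) (σ x' y' (1/2)) ≤ (dist x x' + dist y y') / 2 := by
    intro x y x' y'
    have := hcon x x' y y' _ hhalf
    linarith
  have hi : ∀ x, σ x x (1/2) = x := by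
    intro x
    have := hg x x (1/2) hhalf 0 (by simp)
    rw [dist_self, mul_zero, h0] at this
    exact dist_eq_zero.1 this
  refine fixed_mid (fun x y => σ x y (1/2)) hi hmid hl S (fun s hs => (hiso s hs).1) hcomp
    (fun s hs x y => hequiv s hs x y _ hhalf) K hK hKne
    (fun s hs a ha => (hinv s hs) ▸ Set.mem_image_of_mem s ha) _ isClosed_closure ?_ ?_
  · have hmono : Monotone (convSigmaSets σ K) := by
      refine monotone_nat_of_le_succ (fun k x hx => ?_)
      exact ⟨x, hx, x, hx, 0, by simp, (h0 x x).symm⟩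
    have hcont : Continuous (Function.uncurry (fun x y => σ x y (1/2))) := by
      have : LipschitzWith 1 (Function.uncurry (fun x y => σ x y (1/2))) := by
        refine LipschitzWith.of_dist_le_mul ?_
        rintro ⟨x, y⟩ ⟨x', y'⟩
        have := hl x y x' y'
        have ha : dist x x' ≤ dist (x, y) (x', y') := le_max_left _ _
        have hb : dist y y' ≤ dist (x, y) (x', y') := le_max_right _ _
        simp only [Function.uncurry, NNReal.coe_one, one_mul]
        linarith
      exact this.continuous
    intro x hx y hy
    refine map_mem_closure₂ (f := fun x y => σ x y (1/2)) hcont hx hy ?_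
    intro a ha c hc
    obtain ⟨i, hi⟩ := Set.mem_iUnion.1 ha
    obtain ⟨j, hj⟩ := Set.mem_iUnion.1 hc
    exact Set.mem_iUnion.2 ⟨max i j + 1, a, hmono (le_max_left i j) hi, c,
      hmono (le_max_right i j) hj, 1/2, hhalf, rfl⟩
  · exact (Set.subset_iUnion (convSigmaSets σ K) 0).trans subset_closure
end

section
/- Let (X,d) be a complete metric space and let σ be a conical geodesic bicombing on X that has the midpoint property. Let φ : X → X be a σ-equivariant isometry. If there is a point x₀ ∈ X and a compact subset K ⊆ X such that limsup_{k→∞} ( sup_{l≥0} (1/k) Σ_{i=0}^{k−1} 1_K(φ^{i+l}(x₀)) ) > 0, where 1_K is the indicator function of K, then there exists a point x⋆ in cl conv_σ({φ^k(x₀) : k ≥ 0}) such that φ(x⋆) = x⋆. -/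
open Set

open Filter Topology

theorem aux_iter {X : Type*} [MetricSpace X] {φ : X → X} (hiso : Isometry φ) (n : ℕ) :
    Isometry φ^[n] := by
  induction n with
  | zero => exact isometry_id
  | succ n ih => exact ih.comp hiso

/-- Counting lemma. -/
theorem aux_count {X : Type*} [MetricSpace X] (φ : X → X) (hiso : Isometry φ) (x₀ : X)
    (ε : ℝ) (P : Finset ℕ) (L : ℕ) (hL : ∀ a ∈ P, a ≤ L)
    (hP : ∀ a ∈ P, ∀ b ∈ P, a ≠ b → ε < dist (φ^[a] x₀) (φ^[b] x₀))
    (p : X) (k l : ℕ) (F : Finset ℕ) (hF : ∀ i ∈ F, i < k ∧ φ^[i + l] x₀ ∈ Metric.ball p (ε/2)) :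
    F.card * P.card ≤ k + L := by
  have hd : ∀ c a b, dist (φ^[a + c] x₀) (φ^[b + c] x₀) = dist (φ^[a] x₀) (φ^[b] x₀) := by
    intro c a b
    rw [add_comm a, add_comm b, Function.iterate_add_apply, Function.iterate_add_apply]
    exact (aux_iter hiso c).dist_eq _ _
  rw [← Finset.card_product, ← Finset.card_range (k + L)]
  apply Finset.card_le_card_of_injOn (fun q => q.1 + q.2)
  · intro q hq
    simp only [Finset.coe_product, Set.mem_prod, Finset.mem_coe] at hq
    have h1 := (hF _ hq.1).1
    have h2 := hL _ hq.2
    simp only [Finset.coe_range, Set.mem_Iio]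
    omega
  · rintro ⟨i, a⟩ hq ⟨j, b⟩ hq' h
    simp only [Finset.coe_product, Set.mem_prod, Finset.mem_coe] at hq hq' h
    by_cases hab : a = b
    · subst hab
      have : i = j := by omega
      rw [this]
    · exfalso
      have h1 := hP a hq.2 b hq'.2 hab
      have e1 := hd (i + j) a b
      have e2 : a + (i + j) = j + (i + a) := by ring
      have e3 : b + (i + j) = i + (i + a) := by rw [h]; ring
      rw [e2, e3, hd] at e1
      have e4 := hd l j i
      have h2 := (hF _ hq.1).2
      have h3 := (hF _ hq'.1).2
      rw [Metric.mem_ball] at h2 h3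
      have := dist_triangle_right (φ^[j + l] x₀) (φ^[i + l] x₀) p
      linarith

theorem aux_tb {X : Type*} [MetricSpace X]
    (φ : X → X) (hiso : Isometry φ)
    (x₀ : X) (K : Set X) (hK : IsCompact K)
    (hrec : 0 < Filter.atTop.limsup (fun k : ℕ =>
      ⨆ l : ℕ, (∑ i ∈ Finset.range k,
        K.indicator (fun _ => (1:ℝ)) (φ^[i + l] x₀)) / k))
    (ε : ℝ) (hε : 0 < ε) :
    ∃ N : ℕ, ∀ k, ∃ i ≤ N, dist (φ^[k] x₀) (φ^[i] x₀) ≤ ε := by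
  classical
  by_contra! hcon
  have hex : ∀ m : ℕ, ∃ P : Finset ℕ, P.card = m ∧
      ∀ a ∈ P, ∀ b ∈ P, a ≠ b → ε < dist (φ^[a] x₀) (φ^[b] x₀) := by
    intro m
    induction m with
    | zero => exact ⟨∅, by simp, by simp⟩
    | succ m ih =>
      obtain ⟨P, hPc, hP⟩ := ih
      obtain ⟨k, hk⟩ := hcon (P.sup id)
      have hk' : ∀ a ∈ P, ε < dist (φ^[k] x₀) (φ^[a] x₀) := fun a ha =>
        hk a (Finset.le_sup (f := id) ha)
      have hkP : k ∉ P := by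
        intro h
        have := hk' k h
        rw [dist_self] at this
        linarith
      refine ⟨insert k P, by rw [Finset.card_insert_of_notMem hkP, hPc], ?_⟩
      intro a ha b hb hab
      rw [Finset.mem_insert] at ha hb
      rcases ha with rfl | ha <;> rcases hb with rfl | hb
      · exact absurd rfl hab
      · exact hk' b hb
      · rw [dist_comm]; exact hk' a ha
      · exact hP a ha b hb hab
  obtain ⟨t, -, htf, htK⟩ := hK.finite_cover_balls (half_pos hε)
  lift t to Finset X using htf
  set Λ := Filter.atTop.limsup (fun k : ℕ =>
      ⨆ l : ℕ, (∑ i ∈ Finset.range k,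
        K.indicator (fun _ => (1:ℝ)) (φ^[i + l] x₀)) / k) with hΛ
  obtain ⟨m, hm⟩ := exists_nat_gt (2 * t.card / Λ)
  have hm0 : (0:ℝ) < m := lt_of_le_of_lt (by positivity) hm
  obtain ⟨P, hPc, hP⟩ := hex m
  set L := P.sup id
  have key : ∀ k l : ℕ, (∑ i ∈ Finset.range k,
        K.indicator (fun _ => (1:ℝ)) (φ^[i + l] x₀)) * m ≤ t.card * (k + L) := by
    intro k l
    have h1 : (∑ i ∈ Finset.range k, K.indicator (fun _ => (1:ℝ)) (φ^[i + l] x₀)) ≤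
        ∑ i ∈ Finset.range k, ∑ p ∈ t, (if φ^[i + l] x₀ ∈ Metric.ball p (ε/2) then (1:ℝ) else 0) := by
      apply Finset.sum_le_sum
      intro i _
      have hnn : ∀ p ∈ t, (0:ℝ) ≤ (if φ^[i + l] x₀ ∈ Metric.ball p (ε/2) then (1:ℝ) else 0) := by
        intro p _; split_ifs <;> norm_num
      by_cases hi : φ^[i + l] x₀ ∈ K
      · rw [Set.indicator_of_mem hi]
        have := htK hi
        simp only [Set.mem_iUnion] at this
        obtain ⟨p, hp, hpb⟩ := this
        have h2 := Finset.single_le_sum hnn hp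
        rwa [if_pos hpb] at h2
      · rw [Set.indicator_of_notMem hi]
        exact Finset.sum_nonneg hnn
    rw [Finset.sum_comm] at h1
    have h2 : ∀ p ∈ t, (∑ i ∈ Finset.range k,
        (if φ^[i + l] x₀ ∈ Metric.ball p (ε/2) then (1:ℝ) else 0)) * m ≤ (k + L) := by
      intro p _
      rw [Finset.sum_boole, ← hPc]
      have := aux_count φ hiso x₀ ε P L (fun a ha => Finset.le_sup (f := id) ha) hP p k l
        ((Finset.range k).filter fun i => φ^[i + l] x₀ ∈ Metric.ball p (ε/2))
        (by intro i hi; rw [Finset.mem_filter, Finset.mem_range] at hi; exact hi)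
      exact_mod_cast this
    calc _ ≤ _ := mul_le_mul_of_nonneg_right h1 hm0.le
      _ = _ := Finset.sum_mul _ _ _
      _ ≤ ∑ p ∈ t, ((k:ℝ) + L) := Finset.sum_le_sum h2
      _ = _ := by rw [Finset.sum_const, nsmul_eq_mul]
  have hle : Λ ≤ 2 * t.card / m := by
    apply Filter.limsup_le_of_le
    · apply Filter.IsCoboundedUnder.of_frequently_ge (a := 0)
      apply Filter.Eventually.frequently
      filter_upwards with k
      apply Real.iSup_nonneg
      intro l
      apply div_nonneg _ (Nat.cast_nonneg _)
      apply Finset.sum_nonneg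
      intro i _
      exact Set.indicator_nonneg (fun _ _ => zero_le_one) _
    · filter_upwards [Filter.eventually_ge_atTop (L + 1)] with k hk
      apply ciSup_le
      intro l
      have hk' : (L:ℝ) + 1 ≤ k := by exact_mod_cast hk
      have hL0 : (0:ℝ) ≤ L := Nat.cast_nonneg _
      have hk0 : (0:ℝ) < k := by linarith
      rw [div_le_div_iff₀ hk0 hm0]
      refine (key k l).trans ?_
      have : (0:ℝ) ≤ t.card := Nat.cast_nonneg _
      nlinarith
  have := (div_lt_iff₀ hrec).1 hm
  rw [le_div_iff₀ hm0] at hle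
  linarith

section geo

variable {X : Type*} [MetricSpace X] {σ : X → X → ℝ → X} {φ : X → X}

theorem aux_mid_ball (hσ : IsConicalBicombing σ) (w x y : X) :
    dist w (σ x y (1/2)) ≤ (dist w x + dist w y) / 2 := by
  obtain ⟨h0, h1, h2, h3⟩ := hσ
  have hI : (1/2:ℝ) ∈ Icc (0:ℝ) 1 := by constructor <;> norm_num
  have e : σ w w (1/2) = w := by
    have := h2 w w (1/2) hI 0 (by simp)
    rw [h0, dist_self, mul_zero] at this
    exact dist_eq_zero.1 this
  have := h3 w x w y (1/2) hI
  rw [e] at this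
  linarith

/-- The averaging map. -/
noncomputable def auxT (σ : X → X → ℝ → X) (φ : X → X) (x : X) : X := σ x (φ x) (1/2)

theorem auxT_comm (hequiv : SigmaEquivariant σ φ) : Function.Commute (auxT σ φ) φ := by
  intro x
  unfold auxT
  exact (hequiv _ _ _ (by constructor <;> norm_num)).symm

theorem auxT_comm' (hequiv : SigmaEquivariant σ φ) (n k : ℕ) (x : X) :
    (auxT σ φ)^[n] (φ^[k] x) = φ^[k] ((auxT σ φ)^[n] x) :=
  (auxT_comm hequiv).iterate_iterate n k x

theorem auxT_nonexp (hσ : IsConicalBicombing σ) (hiso : Isometry φ) (n : ℕ) (x y : X) :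
    dist ((auxT σ φ)^[n] x) ((auxT σ φ)^[n] y) ≤ dist x y := by
  induction n generalizing x y with
  | zero => simp
  | succ n ih =>
    rw [Function.iterate_succ_apply, Function.iterate_succ_apply]
    refine (ih _ _).trans ?_
    have := hσ.2.2.2 x y (φ x) (φ y) (1/2) (by constructor <;> norm_num)
    rw [hiso.dist_eq] at this
    unfold auxT
    linarith

theorem auxT_succ (hequiv : SigmaEquivariant σ φ) (n : ℕ) (x : X) :
    (auxT σ φ)^[n+1] x = σ ((auxT σ φ)^[n] x) ((auxT σ φ)^[n] (φ x)) (1/2) := by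
  rw [Function.iterate_succ_apply']
  have := auxT_comm' hequiv n 1 x
  simp only [Function.iterate_one] at this
  rw [this]; rfl

/-- Balls containing the orbit contain the averages. -/
theorem auxT_ball (hσ : IsConicalBicombing σ) (hequiv : SigmaEquivariant σ φ) (n : ℕ) (w z : X)
    (D : ℝ) (h : ∀ k, dist w (φ^[k] z) ≤ D) : dist w ((auxT σ φ)^[n] z) ≤ D := by
  induction n generalizing z with
  | zero => exact h 0
  | succ n ih =>
    rw [auxT_succ hequiv]
    have h1 := ih z h
    have h2 := ih (φ z) (fun k => h (k+1))
    have := aux_mid_ball hσ w ((auxT σ φ)^[n] z) ((auxT σ φ)^[n] (φ z))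
    linarith

theorem auxT_ball' (hσ : IsConicalBicombing σ) (hequiv : SigmaEquivariant σ φ) (n : ℕ) (w z : X)
    (D : ℝ) (h : ∀ k, dist w (φ^[k] z) ≤ D) (i : ℕ) (hi : i ≤ n)
    (hw : dist w (φ^[i] z) ≤ D / 2) :
    dist w ((auxT σ φ)^[n] z) ≤ (1 - (1/2)^(n+1)) * D := by
  induction n generalizing z i with
  | zero =>
    obtain rfl : i = 0 := by omega
    have : dist w z ≤ D / 2 := hw
    simp only [Function.iterate_zero, id]
    linarith
  | succ n ih =>
    rw [auxT_succ hequiv]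
    have h' : ∀ k, dist w (φ^[k] (φ z)) ≤ D := fun k => h (k+1)
    have h1 := auxT_ball hσ hequiv n w z D h
    have h2 := auxT_ball hσ hequiv n w (φ z) D h'
    have := aux_mid_ball hσ w ((auxT σ φ)^[n] z) ((auxT σ φ)^[n] (φ z))
    rw [pow_succ]
    rcases Nat.lt_or_ge n i with hlt | hge
    · obtain ⟨j, rfl⟩ : ∃ j, i = j + 1 := ⟨i - 1, by omega⟩
      have := ih (φ z) h' j (by omega) hw
      linarith
    · have := ih z h i hge hw
      linarith

theorem auxT_mem (hequiv : SigmaEquivariant σ φ) (n : ℕ) (x₀ : X) (k : ℕ) :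
    (auxT σ φ)^[n] (φ^[k] x₀) ∈ convSigmaSets σ (Set.range fun k : ℕ => φ^[k] x₀) n := by
  induction n generalizing k with
  | zero => exact ⟨k, rfl⟩
  | succ n ih =>
    rw [auxT_succ hequiv]
    refine ⟨_, ih k, _, ih (k+1), 1/2, by constructor <;> norm_num, ?_⟩
    rw [Function.iterate_succ_apply']

/-- One contraction step. -/
theorem auxT_step (hσ : IsConicalBicombing σ) (hiso : Isometry φ) (hequiv : SigmaEquivariant σ φ)
    (N : ℕ) (ε D : ℝ) (hD : ε ≤ D) (z : X) (hz : ∀ k l, dist (φ^[l] z) (φ^[k] z) ≤ D)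
    (hN : ∀ k, ∃ i ≤ N, dist (φ^[k] z) (φ^[i] z) ≤ ε / 2) (k l : ℕ) :
    dist (φ^[l] ((auxT σ φ)^[N] z)) (φ^[k] ((auxT σ φ)^[N] z)) ≤ (1 - (1/2)^(N+1)) * D := by
  have key : ∀ c, dist (φ^[c] z) ((auxT σ φ)^[N] z) ≤ (1 - (1/2)^(N+1)) * D := by
    intro c
    obtain ⟨i, hi, h⟩ := hN c
    exact auxT_ball' hσ hequiv N _ z D (fun k => hz k c) i hi (by linarith)
  have key2 : ∀ c, dist ((auxT σ φ)^[N] z) (φ^[c] ((auxT σ φ)^[N] z)) ≤ (1 - (1/2)^(N+1)) * D := by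
    intro c
    rw [← auxT_comm' hequiv N]
    apply auxT_ball hσ hequiv
    intro j
    rw [← Function.iterate_add_apply, dist_comm]
    exact key _
  rcases le_total l k with h | h
  · obtain ⟨c, rfl⟩ := Nat.exists_eq_add_of_le h
    rw [Function.iterate_add_apply, (aux_iter hiso l).dist_eq]
    exact key2 c
  · obtain ⟨c, rfl⟩ := Nat.exists_eq_add_of_le h
    rw [Function.iterate_add_apply, (aux_iter hiso k).dist_eq, dist_comm]
    exact key2 c

theorem auxT_small (hσ : IsConicalBicombing σ) (hiso : Isometry φ) (hequiv : SigmaEquivariant σ φ)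
    (x₀ : X)
    (htb : ∀ ε > 0, ∃ N : ℕ, ∀ k, ∃ i ≤ N, dist (φ^[k] x₀) (φ^[i] x₀) ≤ ε)
    (ε : ℝ) (hε : 0 < ε) :
    ∃ n : ℕ, ∀ k l, dist (φ^[l] ((auxT σ φ)^[n] x₀)) (φ^[k] ((auxT σ φ)^[n] x₀)) ≤ ε := by
  obtain ⟨N, hN⟩ := htb (ε/2) (half_pos hε)
  obtain ⟨D, hD⟩ : ∃ D, ∀ k l, dist (φ^[l] x₀) (φ^[k] x₀) ≤ D := by
    set R := ∑ i ∈ Finset.range (N+1), dist x₀ (φ^[i] x₀)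
    have hR : ∀ k, dist x₀ (φ^[k] x₀) ≤ R + ε/2 := by
      intro k
      obtain ⟨i, hi, h⟩ := hN k
      have h1 : dist x₀ (φ^[i] x₀) ≤ R := Finset.single_le_sum
        (f := fun i => dist x₀ (φ^[i] x₀)) (fun _ _ => dist_nonneg)
        (Finset.mem_range.2 (by omega))
      have := dist_triangle_right x₀ (φ^[k] x₀) (φ^[i] x₀)
      linarith
    refine ⟨2 * (R + ε/2), fun k l => ?_⟩
    have := dist_triangle_left (φ^[l] x₀) (φ^[k] x₀) x₀
    have h1 := hR k
    have h2 := hR l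
    linarith
  set q : ℝ := 1 - (1/2)^(N+1) with hq
  have hp1 : (1/2:ℝ)^(N+1) ≤ 1 := pow_le_one₀ (by norm_num) (by norm_num)
  have hp0 : 0 < (1/2:ℝ)^(N+1) := by positivity
  have hq0 : 0 ≤ q := by linarith
  have hq1 : q < 1 := by linarith
  have hiter : ∀ m : ℕ, ∀ k l, dist (φ^[l] ((auxT σ φ)^[N*m] x₀)) (φ^[k] ((auxT σ φ)^[N*m] x₀))
      ≤ max ε (q^m * D) := by
    intro m
    induction m with
    | zero => intro k l; simpa using Or.inr (hD k l)
    | succ m ih =>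
      intro k l
      rcases le_total (q^m * D) ε with h | h
      · rw [max_eq_left h] at ih
        refine le_trans ?_ (le_max_left _ _)
        have : N * (m+1) = N + N * m := by ring
        rw [this, Function.iterate_add_apply, ← auxT_comm' hequiv N, ← auxT_comm' hequiv N]
        exact (auxT_nonexp hσ hiso N _ _).trans (ih k l)
      · rw [max_eq_right h] at ih
        refine le_trans ?_ (le_max_right _ _)
        have : N * (m+1) = N + N * m := by ring
        rw [this, Function.iterate_add_apply, pow_succ', mul_assoc]
        apply auxT_step hσ hiso hequiv N ε _ h _ ih
        intro k
        obtain ⟨i, hi, h⟩ := hN k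
        refine ⟨i, hi, ?_⟩
        rw [← auxT_comm' hequiv, ← auxT_comm' hequiv]
        exact (auxT_nonexp hσ hiso _ _ _).trans h
  have hlim : Tendsto (fun m : ℕ => q^m * D) atTop (𝓝 0) := by
    simpa using (tendsto_pow_atTop_nhds_zero_of_lt_one hq0 hq1).mul_const D
  obtain ⟨m, hm⟩ := (hlim.eventually (gt_mem_nhds hε)).exists
  exact ⟨N*m, fun k l => (hiter m k l).trans (max_le le_rfl hm.le)⟩

end geo

theorem fixed_point_of_single_isometry_with_recurrent_orbit
    {X : Type*} [MetricSpace X] [CompleteSpace X]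
    (σ : X → X → ℝ → X) (hσ : IsConicalBicombing σ) (hmid : MidpointProp σ)
    (φ : X → X) (hiso : Isometry φ) (hsurj : Function.Surjective φ)
    (hequiv : SigmaEquivariant σ φ)
    (x₀ : X) (K : Set X) (hK : IsCompact K)
    (hrec : 0 < Filter.atTop.limsup (fun k : ℕ =>
      ⨆ l : ℕ, (∑ i ∈ Finset.range k,
        K.indicator (fun _ => (1:ℝ)) (φ^[i + l] x₀)) / k)) :
    ∃ xs ∈ closure (convSigma σ (Set.range fun k : ℕ => φ^[k] x₀)), φ xs = xs := by
  have htb := aux_tb φ hiso x₀ K hK hrec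
  have hsm := auxT_small hσ hiso hequiv x₀ htb
  have hbd : ∀ ε > 0, ∃ n : ℕ, ∀ m ≥ n,
      dist ((auxT σ φ)^[n] x₀) ((auxT σ φ)^[m] x₀) ≤ ε := by
    intro ε hε
    obtain ⟨n, hn⟩ := hsm ε hε
    refine ⟨n, fun m hm => ?_⟩
    obtain ⟨c, rfl⟩ := Nat.exists_eq_add_of_le hm
    rw [add_comm n c, Function.iterate_add_apply]
    exact auxT_ball hσ hequiv c _ _ ε (fun k => hn k 0)
  have hc : CauchySeq (fun n => (auxT σ φ)^[n] x₀) := by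
    rw [Metric.cauchySeq_iff']
    intro ε hε
    obtain ⟨n, hn⟩ := hbd (ε/2) (half_pos hε)
    refine ⟨n, fun m hm => ?_⟩
    rw [dist_comm]
    have := hn m hm
    linarith
  obtain ⟨z, hz⟩ := cauchySeq_tendsto_of_complete hc
  refine ⟨z, mem_closure_of_tendsto hz (Filter.Eventually.of_forall fun n =>
    Set.mem_iUnion.2 ⟨n, auxT_mem hequiv n x₀ 0⟩), ?_⟩
  have h2 : Filter.Tendsto (fun n => dist (φ ((auxT σ φ)^[n] x₀)) ((auxT σ φ)^[n] x₀))
      Filter.atTop (nhds (dist (φ z) z)) :=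
    ((hiso.continuous.tendsto z).comp hz).dist hz
  apply dist_le_zero.1
  apply le_of_forall_pos_le_add
  intro ε hε
  rw [zero_add]
  obtain ⟨n, hn⟩ := hsm ε hε
  apply le_of_tendsto h2
  filter_upwards [Filter.eventually_ge_atTop n] with m hm
  obtain ⟨c, rfl⟩ := Nat.exists_eq_add_of_le hm
  have e := auxT_comm' hequiv c 1 ((auxT σ φ)^[n] x₀)
  simp only [Function.iterate_one] at e
  rw [add_comm n c, Function.iterate_add_apply, ← e]
  exact (auxT_nonexp hσ hiso c _ _).trans (hn 0 1)
end

section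
/- The Banach space (ℓ¹(ℤ), ‖·‖_⋆) is strictly convex: for all distinct x, y ∈ ℓ¹(ℤ) with ‖x‖_⋆ = ‖y‖_⋆ = 1 and every λ ∈ (0,1), one has ‖(1−λ)x + λy‖_⋆ < 1. -/
/-- The norm `‖x‖_⋆ = sqrt((Σ|x_k|)² + Σ|x_k|²)` on `ℓ¹(ℤ)`. -/
noncomputable def starNorm (x : lp (fun _ : ℤ => ℝ) 1) : ℝ :=
  Real.sqrt ((∑' k : ℤ, |x k|) ^ 2 + ∑' k : ℤ, |x k| ^ 2)
theorem starNorm_strictly_convex (x y : lp (fun _ : ℤ => ℝ) 1) (hxy : x ≠ y)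
    (hx : starNorm x = 1) (hy : starNorm y = 1)
    (l : ℝ) (hl : l ∈ Set.Ioo (0:ℝ) 1) :
    starNorm ((1 - l) • x + l • y) < 1 := by
  obtain ⟨h0, h1⟩ := hl
  have S1 : ∀ z : lp (fun _ : ℤ => ℝ) 1, Summable (fun k => |z k|) := by
    intro z
    have := (lp.memℓp z).summable (by norm_num)
    simpa using this
  have S2 : ∀ z : lp (fun _ : ℤ => ℝ) 1, Summable (fun k => |z k| ^ 2) := by
    intro z
    refine Summable.of_nonneg_of_le (fun k => by positivity) (fun k => ?_)
      ((S1 z).mul_left (∑' k, |z k|))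
    have := (S1 z).le_tsum k (fun j _ => abs_nonneg _)
    nlinarith [abs_nonneg (z k)]
  have hz : ∀ k, ((1 - l) • x + l • y : lp (fun _ : ℤ => ℝ) 1) k = (1 - l) * x k + l * y k := by
    intro k; rfl
  obtain ⟨k0, hk0⟩ : ∃ k, x k ≠ y k := by
    by_contra! h
    exact hxy (lp.ext (funext h))
  unfold starNorm at hx hy ⊢
  rw [Real.sqrt_eq_one] at hx hy
  set z := (1 - l) • x + l • y with hzdef
  have A : ∑' k, |z k| ≤ (1 - l) * ∑' k, |x k| + l * ∑' k, |y k| := by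
    rw [← tsum_mul_left, ← tsum_mul_left,
      ← ((S1 x).mul_left (1 - l)).tsum_add ((S1 y).mul_left l)]
    refine (S1 z).tsum_le_tsum (fun k => ?_) (((S1 x).mul_left (1 - l)).add ((S1 y).mul_left l))
    rw [hz]
    refine (abs_add_le _ _).trans ?_
    rw [abs_mul, abs_mul, abs_of_pos h0, abs_of_pos (sub_pos.2 h1)]
  have key : ∀ a b : ℝ, (1 - l) * a ^ 2 + l * b ^ 2 - ((1 - l) * a + l * b) ^ 2
      = l * (1 - l) * (a - b) ^ 2 := by intro a b; ring
  have hll : 0 < l * (1 - l) := mul_pos h0 (sub_pos.2 h1)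
  have B : ∑' k, |z k| ^ 2 < (1 - l) * ∑' k, |x k| ^ 2 + l * ∑' k, |y k| ^ 2 := by
    rw [← tsum_mul_left, ← tsum_mul_left,
      ← ((S2 x).mul_left (1 - l)).tsum_add ((S2 y).mul_left l)]
    refine Summable.tsum_lt_tsum (i := k0) (fun k => ?_) ?_ (S2 z)
      (((S2 x).mul_left (1 - l)).add ((S2 y).mul_left l))
    · simp only [hz, sq_abs]
      have := mul_nonneg hll.le (sq_nonneg (x k - y k))
      linarith [key (x k) (y k)]
    · simp only [hz, sq_abs]
      have := mul_pos hll (pow_pos (abs_pos.2 (sub_ne_zero.2 hk0)) 2)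
      rw [sq_abs] at this
      linarith [key (x k0) (y k0)]
  have Z0 : 0 ≤ ∑' k, |z k| := tsum_nonneg (fun k => abs_nonneg _)
  have C := pow_le_pow_left₀ Z0 A 2
  rw [Real.sqrt_lt' one_pos]
  have := mul_nonneg hll.le (sq_nonneg ((∑' k, |x k|) - ∑' k, |y k|))
  have := key (∑' k, |x k|) (∑' k, |y k|)
  have e1 := congrArg (fun t => (1 - l) * t) hx
  have e2 := congrArg (fun t => l * t) hy
  simp only [mul_add] at e1 e2
  linarith
end

section
/- If x is an element of the convex hull conv(A) of the set A := {T^k(x₀) : k ∈ ℤ} in ℓ¹(ℤ), then 1 ≤ ‖x‖_⋆ ≤ √2. -/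
/-- The `n`-th power of the shift map `T` on `ℓ¹(ℤ)`: `(T^n x)_k = x_{k-n}`. -/
noncomputable def shiftPow (n : ℤ) (x : lp (fun _ : ℤ => ℝ) 1) : lp (fun _ : ℤ => ℝ) 1 :=
  ⟨fun k => x (k - n), by
    apply memℓp_gen
    have h : Summable fun k : ℤ => ‖x k‖ ^ (1 : ENNReal).toReal :=
      (lp.memℓp x).summable (by norm_num)
    exact ((Equiv.subRight n).summable_iff
      (f := fun k : ℤ => ‖x k‖ ^ (1 : ENNReal).toReal)).mpr h⟩

/-- The sequence with entry `1` at index `0` and `0` elsewhere. -/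
noncomputable def xZero : lp (fun _ : ℤ => ℝ) 1 := lp.single 1 (0:ℤ) (1:ℝ)

theorem hull_aux (x : lp (fun _ : ℤ => ℝ) 1)
    (hx : x ∈ convexHull ℝ (Set.range fun n : ℤ => shiftPow n xZero)) :
    (∀ k, 0 ≤ x k) ∧ HasSum (fun k => x k) 1 := by
  have hc : Convex ℝ {x : lp (fun _ : ℤ => ℝ) 1 | (∀ k, 0 ≤ x k) ∧ HasSum (fun k => x k) 1} := by
    rintro y ⟨hy, hy1⟩ z ⟨hz, hz1⟩ a b ha hb hab
    refine ⟨fun k => ?_, ?_⟩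
    · have := add_nonneg (mul_nonneg ha (hy k)) (mul_nonneg hb (hz k))
      exact this
    · have := (hy1.mul_left a).add (hz1.mul_left b)
      rw [mul_one, mul_one, hab] at this
      exact this
  refine convexHull_min ?_ hc hx
  rintro _ ⟨n, rfl⟩
  have hv : ∀ k, shiftPow n xZero k = if k = n then 1 else 0 := by
    intro k
    change xZero (k - n) = _
    unfold xZero
    rw [lp.single_apply]
    simp [Pi.single_apply, sub_eq_zero]
  refine ⟨fun k => ?_, ?_⟩
  · rw [hv]; split_ifs <;> norm_num
  · simp only [hv]
    exact hasSum_ite_eq n 1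

theorem starNorm_bounds_on_convexHull_of_shift_orbit
    (x : lp (fun _ : ℤ => ℝ) 1)
    (hx : x ∈ convexHull ℝ (Set.range fun n : ℤ => shiftPow n xZero)) :
    1 ≤ starNorm x ∧ starNorm x ≤ Real.sqrt 2 := by
  obtain ⟨h0, h1⟩ := hull_aux x hx
  have hle : ∀ k, x k ≤ 1 := fun k => le_hasSum h1 k (fun j _ => h0 j)
  have hsq : ∀ k, x k ^ 2 ≤ x k := fun k => by nlinarith [h0 k, hle k]
  have hs : Summable fun k => x k ^ 2 :=
    Summable.of_nonneg_of_le (fun k => sq_nonneg _) hsq h1.summable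
  have h2 : ∑' k, x k ^ 2 ≤ 1 := h1.tsum_eq ▸ hs.tsum_le_tsum hsq h1.summable
  have h3 : 0 ≤ ∑' k, x k ^ 2 := tsum_nonneg fun k => sq_nonneg _
  unfold starNorm
  simp only [abs_of_nonneg (h0 _), h1.tsum_eq]
  constructor
  · rw [Real.one_le_sqrt]; linarith
  · apply Real.sqrt_le_sqrt; linarith
end

section
/- Let C denote the closure of the convex hull of A := {T^k(x₀) : k ∈ ℤ} in (ℓ¹(ℤ), ‖·‖_⋆). Then C is a bounded, closed, convex (hence complete) subset with 1 ≤ ‖x‖_⋆ ≤ √2 for all x ∈ C, the shift map T satisfies T(C) = C and is an isometry of (C, ‖·‖_⋆), and T has no fixed point in C, i.e. T(x) ≠ x for every x ∈ C. -/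
theorem aux_summable (x : lp (fun _ : ℤ => ℝ) 1) : Summable fun k : ℤ => |x k| := by
  have h : Summable fun k : ℤ => ‖x k‖ ^ (1 : ENNReal).toReal :=
    (lp.memℓp x).summable (by norm_num)
  simpa using h

theorem aux_norm (x : lp (fun _ : ℤ => ℝ) 1) : ‖x‖ = ∑' k : ℤ, |x k| := by
  have h := lp.norm_eq_tsum_rpow (p := 1) (by norm_num) x
  simpa using h

theorem aux_le (x : lp (fun _ : ℤ => ℝ) 1) (k : ℤ) : |x k| ≤ ‖x‖ := by
  rw [aux_norm]
  exact (aux_summable x).le_tsum k (fun _ _ => abs_nonneg _)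

theorem aux_apply (n : ℤ) (x : lp (fun _ : ℤ => ℝ) 1) (k : ℤ) :
    shiftPow n x k = x (k - n) := rfl

theorem aux_shift_norm (n : ℤ) (x : lp (fun _ : ℤ => ℝ) 1) : ‖shiftPow n x‖ = ‖x‖ := by
  rw [aux_norm, aux_norm]
  exact (Equiv.subRight n).tsum_eq (fun k => |x k|)

theorem aux_shift_shift (m n : ℤ) (x : lp (fun _ : ℤ => ℝ) 1) :
    shiftPow m (shiftPow n x) = shiftPow (m + n) x := by
  ext k
  simp only [aux_apply]
  congr 1
  ring

theorem aux_shift_zero (x : lp (fun _ : ℤ => ℝ) 1) : shiftPow 0 x = x := by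
  ext k
  simp [aux_apply]

theorem aux_shift_sub (n : ℤ) (x y : lp (fun _ : ℤ => ℝ) 1) :
    shiftPow n x - shiftPow n y = shiftPow n (x - y) := by
  ext k
  rfl

theorem aux_star (n : ℤ) (x : lp (fun _ : ℤ => ℝ) 1) :
    starNorm (shiftPow n x) = starNorm x := by
  unfold starNorm
  have h1 := (Equiv.subRight n).tsum_eq (fun k => |x k|)
  have h2 := (Equiv.subRight n).tsum_eq (fun k => |x k| ^ 2)
  simp only [Equiv.subRight_apply] at h1 h2
  simp only [aux_apply, h1, h2]

noncomputable def auxEquiv : lp (fun _ : ℤ => ℝ) 1 ≃ₗᵢ[ℝ] lp (fun _ : ℤ => ℝ) 1 where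
  toFun := shiftPow 1
  invFun := shiftPow (-1)
  map_add' x y := by ext k; rfl
  map_smul' c x := by ext k; rfl
  left_inv x := by rw [aux_shift_shift]; exact aux_shift_zero x
  right_inv x := by rw [aux_shift_shift]; exact aux_shift_zero x
  norm_map' x := aux_shift_norm 1 x

def auxS : Set (lp (fun _ : ℤ => ℝ) 1) := {x | (∀ k, 0 ≤ x k) ∧ ‖x‖ = 1}

theorem aux_closed : IsClosed auxS := by
  have hc : ∀ k : ℤ, Continuous fun x : lp (fun _ : ℤ => ℝ) 1 => x k := by
    intro k
    refine (LipschitzWith.of_dist_le_mul (K := 1) fun x y => ?_).continuous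
    rw [dist_eq_norm, dist_eq_norm]
    simpa using aux_le (x - y) k
  have : auxS = (⋂ k : ℤ, {x | 0 ≤ x k}) ∩ {x | ‖x‖ = 1} := by
    ext x; simp [auxS]
  rw [this]
  exact (isClosed_iInter fun k => isClosed_le continuous_const (hc k)).inter
    (isClosed_eq continuous_norm continuous_const)

theorem aux_convex : Convex ℝ auxS := by
  rintro x ⟨hx, hx1⟩ y ⟨hy, hy1⟩ a b ha hb hab
  have h0 : ∀ k, |(a • x + b • y) k| = a * |x k| + b * |y k| := by
    intro k
    have : (a • x + b • y) k = a * x k + b * y k := rfl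
    rw [this, abs_of_nonneg (hx k), abs_of_nonneg (hy k), abs_of_nonneg]
    have := hx k
    have := hy k
    positivity
  refine ⟨fun k => ?_, ?_⟩
  · have : (a • x + b • y) k = a * x k + b * y k := rfl
    rw [this]
    have := hx k
    have := hy k
    positivity
  · rw [aux_norm] at *
    simp only [h0]
    rw [((aux_summable x).mul_left a).tsum_add ((aux_summable y).mul_left b),
      tsum_mul_left, tsum_mul_left, hx1, hy1]
    linarith

theorem aux_sub : closure (convexHull ℝ (Set.range fun n : ℤ => shiftPow n xZero)) ⊆ auxS := by
  refine closure_minimal (convexHull_min ?_ aux_convex) aux_closed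
  rintro _ ⟨n, rfl⟩
  refine ⟨fun k => ?_, ?_⟩
  · show 0 ≤ xZero (k - n)
    rw [xZero, lp.single_apply]
    by_cases h : k - n = 0
    · rw [h]; simp
    · simp [h]
  · show ‖shiftPow n xZero‖ = 1
    rw [aux_shift_norm, xZero, lp.norm_single (by norm_num)]
    simp

theorem aux_image :
    shiftPow 1 '' closure (convexHull ℝ (Set.range fun n : ℤ => shiftPow n xZero)) =
      closure (convexHull ℝ (Set.range fun n : ℤ => shiftPow n xZero)) := by
  have h1 := auxEquiv.toHomeomorph.image_closure
    (convexHull ℝ (Set.range fun n : ℤ => shiftPow n xZero))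
  have h2 := auxEquiv.toLinearEquiv.toLinearMap.image_convexHull
    (Set.range fun n : ℤ => shiftPow n xZero)
  change shiftPow 1 '' _ = closure (shiftPow 1 '' _) at h1
  change shiftPow 1 '' _ = convexHull ℝ (shiftPow 1 '' _) at h2
  rw [h1, h2]
  congr 2
  ext x
  constructor
  · rintro ⟨_, ⟨n, rfl⟩, rfl⟩
    exact ⟨1 + n, (aux_shift_shift 1 n xZero).symm⟩
  · rintro ⟨n, rfl⟩
    refine ⟨_, ⟨n - 1, rfl⟩, ?_⟩
    simp only [aux_shift_shift]
    congr 1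
    ring

theorem aux_fix (x : lp (fun _ : ℤ => ℝ) 1) (hx : ‖x‖ = 1) : shiftPow 1 x ≠ x := by
  intro h
  have h1 : ∀ k : ℤ, x (k - 1) = x k := fun k => by
    rw [← aux_apply, h]
  have h2 : ∀ k : ℤ, x k = x 0 := by
    intro k
    induction k using Int.induction_on with
    | zero => rfl
    | succ i ih => rw [← h1]; simpa using ih
    | pred i ih => rw [h1]; exact ih
  have hs := aux_summable x
  simp only [h2] at hs
  rw [summable_const_iff] at hs
  rw [aux_norm] at hx
  simp only [h2, hs] at hx
  simp at hx

theorem aux_bounds (x : lp (fun _ : ℤ => ℝ) 1) (hx : ‖x‖ = 1) :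
    1 ≤ starNorm x ∧ starNorm x ≤ Real.sqrt 2 := by
  have hle : ∀ k, |x k| ^ 2 ≤ |x k| := fun k => by
    have := aux_le x k
    nlinarith [abs_nonneg (x k)]
  have hs : Summable fun k => |x k| ^ 2 :=
    Summable.of_nonneg_of_le (fun k => by positivity) hle (aux_summable x)
  have h1 := hs.tsum_le_tsum hle (aux_summable x)
  have h0 : 0 ≤ ∑' k, |x k| ^ 2 := tsum_nonneg fun k => by positivity
  rw [← aux_norm, hx] at h1
  unfold starNorm
  rw [← aux_norm, hx]
  exact ⟨Real.one_le_sqrt.mpr (by linarith), Real.sqrt_le_sqrt (by linarith)⟩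

theorem busemann_counterexample_properties :
    Bornology.IsBounded (closure (convexHull ℝ (Set.range fun n : ℤ => shiftPow n xZero))) ∧
    IsClosed (closure (convexHull ℝ (Set.range fun n : ℤ => shiftPow n xZero))) ∧
    Convex ℝ (closure (convexHull ℝ (Set.range fun n : ℤ => shiftPow n xZero))) ∧
    IsComplete (closure (convexHull ℝ (Set.range fun n : ℤ => shiftPow n xZero))) ∧
    (∀ x ∈ closure (convexHull ℝ (Set.range fun n : ℤ => shiftPow n xZero)),
      1 ≤ starNorm x ∧ starNorm x ≤ Real.sqrt 2) ∧
    shiftPow 1 '' closure (convexHull ℝ (Set.range fun n : ℤ => shiftPow n xZero)) =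
      closure (convexHull ℝ (Set.range fun n : ℤ => shiftPow n xZero)) ∧
    (∀ x ∈ closure (convexHull ℝ (Set.range fun n : ℤ => shiftPow n xZero)),
      ∀ y ∈ closure (convexHull ℝ (Set.range fun n : ℤ => shiftPow n xZero)),
        starNorm (shiftPow 1 x - shiftPow 1 y) = starNorm (x - y)) ∧
    (∀ x ∈ closure (convexHull ℝ (Set.range fun n : ℤ => shiftPow n xZero)),
      shiftPow 1 x ≠ x) := by
  refine ⟨?_, isClosed_closure, (convex_convexHull ℝ _).closure, isClosed_closure.isComplete,
    fun x hx => aux_bounds x (aux_sub hx).2, aux_image, fun x _ y _ => ?_,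
    fun x hx => aux_fix x (aux_sub hx).2⟩
  · refine (isBounded_iff_forall_norm_le.mpr ⟨1, fun x hx => ?_⟩)
    exact (aux_sub hx).2.le
  · rw [aux_shift_sub, aux_star]
end

section
/- Let (E, ‖·‖) be a Banach space. Then the map μ ↦ ∫_E x dμ(x) (Bochner integral) is a well-defined contracting barycenter map on P₁(E), and it is the only one: every contracting barycenter map β : P₁(E) → E satisfies β(μ) = ∫_E x dμ(x) for all μ ∈ P₁(E). -/
open MeasureTheory

/-- The first Wasserstein distance, via Kantorovich–Rubinstein duality:
`W¹(μ,ν) = sup { ∫ f dμ − ∫ f dν : f 1-Lipschitz }`. -/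
noncomputable def W1 {X : Type*} [MetricSpace X] [MeasurableSpace X]
    (μ ν : Measure X) : ℝ :=
  sSup {r : ℝ | ∃ f : X → ℝ, LipschitzWith 1 f ∧ r = ∫ x, f x ∂μ - ∫ x, f x ∂ν}

/-- The support of a measure: all points whose open neighbourhoods have positive measure. -/
def mSupport {X : Type*} [TopologicalSpace X] [MeasurableSpace X] (μ : Measure X) : Set X :=
  {x | ∀ U : Set X, IsOpen U → x ∈ U → 0 < μ U}

/-- `μ ∈ P₁(X)`: a Radon probability measure with finite first moment. -/
def MemP1 {X : Type*} [MetricSpace X] [MeasurableSpace X] (μ : Measure X) : Prop :=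
  IsProbabilityMeasure μ ∧ (∀ K : Set X, IsCompact K → μ K < ⊤) ∧
  μ.InnerRegularWRT IsCompact MeasurableSet ∧
  ∃ x₀ : X, HasFiniteIntegral (fun x => dist x x₀) μ
/-- A contracting barycenter map on `P₁(X)`. -/
def IsContractingBarycenter {X : Type*} [MetricSpace X] [MeasurableSpace X]
    (β : Measure X → X) : Prop :=
  (∀ x : X, β (Measure.dirac x) = x) ∧
  ∀ μ ν : Measure X, MemP1 μ → MemP1 ν → dist (β μ) (β ν) ≤ W1 μ ν


lemma aux_aesm {E : Type*} [NormedAddCommGroup E] [MeasurableSpace E] [BorelSpace E]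
    {μ : Measure E} (h : MemP1 μ) : Integrable (fun x : E => x) μ := by
  obtain ⟨hp, -, hr, x₀, hx⟩ := h
  have hm : AEStronglyMeasurable (fun x : E => x) μ := by
    rw [aestronglyMeasurable_iff_aemeasurable_separable]
    refine ⟨aemeasurable_id, ?_⟩
    obtain ⟨r, -, hr1, hr2⟩ := exists_seq_strictMono_tendsto' (zero_lt_one (α := ENNReal))
    have : ∀ n, ∃ K : Set E, K ⊆ Set.univ ∧ IsCompact K ∧ r n < μ K := fun n =>
      hr MeasurableSet.univ (r n) (by rw [measure_univ]; exact (hr1 n).2)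
    choose K _ hK hrK using this
    refine ⟨⋃ n, K n, .iUnion fun n => (hK n).isSeparable, ?_⟩
    have hms : MeasurableSet (⋃ n, K n) := .iUnion fun n => (hK n).measurableSet
    change μ (⋃ n, K n)ᶜ = 0
    rw [prob_compl_eq_zero_iff hms]
    refine le_antisymm prob_le_one (le_of_tendsto' hr2 fun n => ?_)
    exact (hrK n).le.trans (measure_mono (Set.subset_iUnion K n))
  have h1 : Integrable (fun x : E => dist x x₀) μ :=
    ⟨(continuous_id.dist continuous_const).aestronglyMeasurable, hx⟩
  refine (h1.add (integrable_const ‖x₀‖)).mono' hm (.of_forall fun x => ?_)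
  simp only [Pi.add_apply, dist_eq_norm]
  calc ‖x‖ = ‖(x - x₀) + x₀‖ := by simp
    _ ≤ _ := norm_add_le _ _

lemma aux_lip_int {E : Type*} [NormedAddCommGroup E] [MeasurableSpace E] [BorelSpace E]
    {μ : Measure E} (h : MemP1 μ) {f : E → ℝ} (hf : LipschitzWith 1 f) : Integrable f μ := by
  have hi := aux_aesm h
  have := h.1
  refine (hi.norm.add (integrable_const ‖f 0‖)).mono' hf.continuous.aestronglyMeasurable
    (.of_forall fun x => ?_)
  have := hf.dist_le_mul x 0
  simp only [dist_eq_norm, sub_zero, NNReal.coe_one, one_mul] at this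
  simp only [Pi.add_apply]
  calc ‖f x‖ = ‖(f x - f 0) + f 0‖ := by simp
    _ ≤ _ := norm_add_le _ _
    _ ≤ _ := by gcongr

lemma aux_le_W1 {E : Type*} [NormedAddCommGroup E] [MeasurableSpace E] [BorelSpace E]
    {μ ν : Measure E} (h : MemP1 μ) (h' : MemP1 ν) {f : E → ℝ} (hf : LipschitzWith 1 f) :
    ∫ x, f x ∂μ - ∫ x, f x ∂ν ≤ W1 μ ν := by
  refine le_csSup ⟨∫ x, ‖x‖ ∂μ + ∫ x, ‖x‖ ∂ν, ?_⟩ ⟨f, hf, rfl⟩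
  rintro _ ⟨g, hg, rfl⟩
  have := h.1
  have := h'.1
  have i1 := (aux_aesm h).norm
  have i2 := (aux_aesm h').norm
  have key : ∀ x, |g x - g 0| ≤ ‖x‖ := fun x => by
    have := hg.dist_le_mul x 0
    simpa [dist_eq_norm] using this
  have e1 : ∫ x, g x ∂μ ≤ ∫ x, (‖x‖ + g 0) ∂μ :=
    integral_mono (aux_lip_int h hg) (i1.add (integrable_const _)) fun x => by
      have := abs_le.1 (key x); simp only; linarith
  have e2 : ∫ x, (g 0 - ‖x‖) ∂ν ≤ ∫ x, g x ∂ν :=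
    integral_mono ((integrable_const _).sub i2) (aux_lip_int h' hg) fun x => by
      have := abs_le.1 (key x); simp only; linarith
  rw [integral_add i1 (integrable_const _)] at e1
  rw [integral_sub (integrable_const _) i2] at e2
  simp at e1 e2
  linarith

lemma aux_dirac {E : Type*} [NormedAddCommGroup E] [MeasurableSpace E] [BorelSpace E]
    {μ : Measure E} (hμ : MemP1 μ) (g : SimpleFunc E E) : MemP1 (μ.map g) := by
  have := hμ.1
  have hp : IsProbabilityMeasure (μ.map g) :=
    Measure.isProbabilityMeasure_map g.measurable.aemeasurable
  refine ⟨hp, fun K _ => measure_lt_top _ _, ?_, 0, ?_⟩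
  · intro A hA r hr
    have hfin : (A ∩ Set.range g).Finite := g.finite_range.subset Set.inter_subset_right
    refine ⟨A ∩ Set.range g, Set.inter_subset_left, hfin.isCompact, ?_⟩
    rw [Measure.map_apply g.measurable hA] at hr
    rw [Measure.map_apply g.measurable hfin.measurableSet]
    simpa using hr
  · have hc : AEStronglyMeasurable (fun x : E => dist x 0) (μ.map g) :=
      (continuous_id.dist continuous_const).aestronglyMeasurable
    have : Integrable (fun x : E => dist x 0) (μ.map g) := by
      rw [integrable_map_measure hc g.measurable.aemeasurable]
      exact (g.map (fun x => dist x 0)).integrable_of_isFiniteMeasure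
    exact this.2

lemma aux_memdirac {E : Type*} [NormedAddCommGroup E] [MeasurableSpace E] [BorelSpace E]
    (x : E) : MemP1 (Measure.dirac x) := by
  refine ⟨inferInstance, fun K _ => measure_lt_top _ _, ?_, x, ?_⟩
  · intro A hA r hr
    refine ⟨A ∩ {x}, Set.inter_subset_left,
      ((Set.finite_singleton x).subset Set.inter_subset_right).isCompact, ?_⟩
    rw [Measure.dirac_apply' _ hA] at hr
    rw [Measure.dirac_apply' _ (hA.inter (measurableSet_singleton x))]
    by_cases hx : x ∈ A <;> simpa [hx] using hr
  · have hc : Continuous (fun y : E => dist y x) := continuous_id.dist continuous_const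
    unfold HasFiniteIntegral
    rw [lintegral_dirac' _ (by exact hc.measurable.enorm)]
    simp

lemma aux_fin {G Ω : Type*} [NormedAddCommGroup G] [NormedSpace ℝ G] [FiniteDimensional ℝ G]
    [MeasurableSpace Ω] (μ : Measure Ω) [IsProbabilityMeasure μ] (h : Ω → G)
    (hi : Integrable h μ) (b : G) (hb : ∀ x, ‖b - x‖ ≤ ∫ ω, ‖h ω - x‖ ∂μ) :
    b = ∫ ω, h ω ∂μ := by
  letI : MeasurableSpace G := borel G
  haveI : BorelSpace G := ⟨rfl⟩
  have hae : ∀ᵐ v ∂(Measure.addHaar : Measure G), DifferentiableAt ℝ (fun x : G => ‖x‖) v :=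
    lipschitzWith_one_norm.ae_differentiableAt
  have hd := Measure.dense_of_ae hae
  by_contra hne
  set u := b - ∫ ω, h ω ∂μ with hu
  have hu0 : 0 < ‖u‖ := norm_pos_iff.2 (sub_ne_zero.2 hne)
  obtain ⟨v, hv, hvu⟩ := Metric.dense_iff.1 hd u (‖u‖ / 2) (by positivity)
  rw [Metric.mem_ball, dist_eq_norm] at hv
  obtain ⟨L, hL⟩ := hvu
  have hLn : ‖L‖ ≤ 1 := by
    simpa using hL.le_of_lipschitz lipschitzWith_one_norm
  -- limits along t = n + 1
  have lim : ∀ y : G, Filter.Tendsto (fun n : ℕ => ‖y + (n : ℝ) • v‖ - (n : ℝ) * ‖v‖)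
      Filter.atTop (nhds (L y)) := by
    intro y
    have h1 := hL.lim (v := y) (c := fun n : ℕ => (n : ℝ)) (l := Filter.atTop)
      (by simpa using (tendsto_natCast_atTop_atTop (R := ℝ)))
    refine h1.congr' ?_
    filter_upwards [Filter.eventually_gt_atTop 0] with n hn
    have hn' : (0 : ℝ) < n := by exact_mod_cast hn
    have : y + (n : ℝ) • v = (n : ℝ) • (v + (n : ℝ)⁻¹ • y) := by
      rw [smul_add, smul_smul, mul_inv_cancel₀ hn'.ne', one_smul, add_comm]
    rw [this, norm_smul, Real.norm_of_nonneg hn'.le, smul_eq_mul]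
    ring
  have hLv : L v = ‖v‖ := by
    refine tendsto_nhds_unique (lim v) (tendsto_const_nhds.congr fun n => ?_)
    have : v + (n : ℝ) • v = ((n : ℝ) + 1) • v := by rw [add_smul, one_smul, add_comm]
    rw [this, norm_smul, Real.norm_of_nonneg (by positivity)]
    ring
  have hnv : ∀ n : ℕ, ‖(n : ℝ) • v‖ = n * ‖v‖ := fun n => by
    rw [norm_smul, Real.norm_of_nonneg (by positivity)]
  have lim2 : Filter.Tendsto (fun n : ℕ => ∫ ω, (‖h ω + (n : ℝ) • v‖ - (n : ℝ) * ‖v‖) ∂μ)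
      Filter.atTop (nhds (∫ ω, L (h ω) ∂μ)) := by
    refine tendsto_integral_of_dominated_convergence (fun ω => ‖h ω‖) (fun n => ?_) hi.norm
      (fun n => .of_forall fun ω => ?_) (.of_forall fun ω => lim _)
    · exact ((hi.1.add aestronglyMeasurable_const).norm).sub aestronglyMeasurable_const
    · rw [← hnv]
      have := abs_norm_sub_norm_le (h ω + (n : ℝ) • v) ((n : ℝ) • v)
      simpa using this
  have hle : L b ≤ ∫ ω, L (h ω) ∂μ := by
    refine le_of_tendsto_of_tendsto' (lim b) lim2 fun n => ?_
    have := hb (-((n : ℝ) • v))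
    simp only [sub_neg_eq_add] at this
    have hin : Integrable (fun ω => ‖h ω + (n : ℝ) • v‖) μ := (hi.add (integrable_const _)).norm
    rw [integral_sub hin (integrable_const _)]
    simpa using this
  rw [L.integral_comp_comm hi] at hle
  have hLu : L u ≤ 0 := by rw [hu, map_sub]; linarith
  have h3 : L (v - u) ≤ ‖v - u‖ :=
    (le_abs_self _).trans ((L.le_opNorm _).trans (by nlinarith [norm_nonneg (v - u)]))
  rw [map_sub, hLv] at h3
  have h4 : ‖u‖ ≤ ‖v‖ + ‖v - u‖ := by
    have := norm_sub_le v (v - u)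
    simpa using this
  linarith

lemma aux_W1_le {E : Type*} [NormedAddCommGroup E] [MeasurableSpace E] [BorelSpace E]
    {μ : Measure E} (hμ : MemP1 μ) (g : SimpleFunc E E) :
    W1 μ (μ.map g) ≤ ∫ x, ‖x - g x‖ ∂μ := by
  have := hμ.1
  have hg : Integrable g μ := g.integrable_of_isFiniteMeasure
  refine csSup_le ⟨_, fun _ => 0, LipschitzWith.const' 0, rfl⟩ ?_
  rintro _ ⟨f, hf, rfl⟩
  have hfg : Integrable (fun x => f (g x)) μ := (g.map f).integrable_of_isFiniteMeasure
  rw [integral_map g.measurable.aemeasurable hf.continuous.aestronglyMeasurable,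
    ← integral_sub (aux_lip_int hμ hf) hfg]
  refine integral_mono ((aux_lip_int hμ hf).sub hfg) ((aux_aesm hμ).sub hg).norm fun x => ?_
  have := hf.dist_le_mul x (g x)
  simp only [dist_eq_norm, NNReal.coe_one, one_mul] at this
  exact (le_abs_self _).trans this

lemma aux_W1_dirac {E : Type*} [NormedAddCommGroup E] [MeasurableSpace E] [BorelSpace E]
    {μ : Measure E} (hμ : MemP1 μ) (y : E) :
    W1 μ (Measure.dirac y) ≤ ∫ x, ‖x - y‖ ∂μ := by
  have := hμ.1
  have h := aux_W1_le hμ (SimpleFunc.const E y)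
  have e : μ.map (SimpleFunc.const E y) = Measure.dirac y := by
    change μ.map (fun _ => y) = _
    rw [Measure.map_const, measure_univ, one_smul]
  rw [e] at h
  simpa using h

lemma aux_contract {E : Type*} [NormedAddCommGroup E] [NormedSpace ℝ E] [CompleteSpace E]
    [MeasurableSpace E] [BorelSpace E] :
    IsContractingBarycenter (fun μ : Measure E => ∫ x, x ∂μ) := by
  refine ⟨fun x => integral_dirac _ _, fun μ ν hμ hν => ?_⟩
  obtain ⟨g, hg, hgv⟩ := exists_dual_vector'' ℝ (∫ x, x ∂μ - ∫ x, x ∂ν)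
  have hl : LipschitzWith 1 g := g.lipschitz.weaken (by exact_mod_cast hg)
  have := aux_le_W1 hμ hν hl
  rw [g.integral_comp_comm (aux_aesm hμ), g.integral_comp_comm (aux_aesm hν), ← map_sub, hgv]
    at this
  simpa [dist_eq_norm] using this

lemma aux_simple {E : Type*} [NormedAddCommGroup E] [NormedSpace ℝ E] [CompleteSpace E]
    [MeasurableSpace E] [BorelSpace E] (β : Measure E → E) (hβ : IsContractingBarycenter β)
    {μ : Measure E} (hμ : MemP1 μ) (g : SimpleFunc E E) :
    β (μ.map g) = ∫ x, g x ∂μ := by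
  classical
  have := hμ.1
  have hν := aux_dirac hμ g
  set b := β (μ.map g) with hbdef
  let G : Submodule ℝ E := Submodule.span ℝ (Set.range g ∪ {b})
  haveI : FiniteDimensional ℝ G :=
    FiniteDimensional.span_of_finite ℝ (g.finite_range.union (Set.finite_singleton b))
  have hgG : ∀ x, g x ∈ G := fun x => Submodule.subset_span (Or.inl ⟨x, rfl⟩)
  have hbG : b ∈ G := Submodule.subset_span (Or.inr rfl)
  let h : SimpleFunc E G := g.map (fun y => if hy : y ∈ G then (⟨y, hy⟩ : G) else 0)
  have hh : ∀ x, ((h x : G) : E) = g x := fun x => by simp [h, hgG x]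
  have hi : Integrable h μ := h.integrable_of_isFiniteMeasure
  have key := aux_fin μ h hi ⟨b, hbG⟩ (fun x => by
    have h1 := hβ.2 _ _ hν (aux_memdirac (x : E))
    rw [hβ.1, dist_eq_norm] at h1
    have h2 := h1.trans (aux_W1_dirac hν (x : E))
    have hc : Continuous (fun y : E => ‖y - (x : E)‖) := by fun_prop
    rw [integral_map g.measurable.aemeasurable hc.aestronglyMeasurable] at h2
    rw [← hbdef] at h2
    simp only [← hh] at h2
    exact h2)
  have h3 := congrArg G.subtypeL key
  rw [← G.subtypeL.integral_comp_comm hi] at h3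
  simpa [hh] using h3

theorem banach_barycenter_is_integral_and_unique
    {E : Type*} [NormedAddCommGroup E] [NormedSpace ℝ E] [CompleteSpace E]
    [MeasurableSpace E] [BorelSpace E] :
    IsContractingBarycenter (fun μ : Measure E => ∫ x, x ∂μ) ∧
    ∀ β : Measure E → E, IsContractingBarycenter β →
      ∀ μ : Measure E, MemP1 μ → β μ = ∫ x, x ∂μ := by
  refine ⟨aux_contract, fun β hβ μ hμ => ?_⟩
  have := hμ.1
  refine eq_of_forall_dist_le fun ε hε => ?_
  have hid := aux_aesm hμ
  obtain ⟨g, hg, -⟩ := (memLp_one_iff_integrable.2 hid).exists_simpleFunc_eLpNorm_sub_lt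
    ENNReal.one_ne_top (ε := ENNReal.ofReal (ε / 2)) (by simpa using hε)
  have hgi : Integrable g μ := g.integrable_of_isFiniteMeasure
  have hn : ∫ x, ‖x - g x‖ ∂μ ≤ ε / 2 := by
    rw [eLpNorm_one_eq_lintegral_enorm] at hg
    change ∫ x, ‖((fun x : E => x) - (g : E → E)) x‖ ∂μ ≤ ε / 2
    rw [integral_norm_eq_lintegral_enorm (hid.sub hgi).1]
    exact ENNReal.toReal_le_of_le_ofReal (by positivity) hg.le
  have h1 := (hβ.2 _ _ hμ (aux_dirac hμ g)).trans (aux_W1_le hμ g)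
  rw [aux_simple β hβ hμ g] at h1
  have h2 : dist (∫ x, g x ∂μ) (∫ x, x ∂μ) ≤ ∫ x, ‖x - g x‖ ∂μ := by
    rw [dist_comm, dist_eq_norm, ← integral_sub hid hgi]
    exact norm_integral_le_integral_norm _
  linarith [dist_triangle (β μ) (∫ x, g x ∂μ) (∫ x, x ∂μ)]
end

section
/- Let Σ be a countable semigroup with a Følner sequence (Σ_k)_{k≥1}, and let Θ : ℓ∞(Σ) → ℝ be a linear functional. Then the following are equivalent: (1) Θ is positive and a generalized limit; (2) Θ(x) ≤ liminf_{k→∞} ( sup_{s∈Σ} (1/|Σ_k|) Σ_{h∈Σ_k} x_{hs} ) for all x ∈ ℓ∞(Σ); (3) Θ(x) ≤ limsup_{k→∞} ( sup_{s∈Σ} (1/|Σ_k|) Σ_{h∈Σ_k} x_{hs} ) for all x ∈ ℓ∞(Σ). -/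
open Filter BoundedContinuousFunction

/-- `(F k)` is a Følner sequence of the semigroup `S`. -/
def IsFolner {S : Type*} [Semigroup S] [DecidableEq S] (F : ℕ → Finset S) : Prop :=
  (∀ k, (F k).Nonempty) ∧
  ∀ s : S, Tendsto
    (fun k => ((symmDiff ((F k).image (fun h => s * h)) (F k)).card : ℝ) / (F k).card)
    atTop (nhds 0)

/-- The average `(1/|F|) Σ_{h∈F} x_{h s}`. -/
noncomputable def folnerAvg {S : Type*} [Semigroup S] [TopologicalSpace S]
    (F : Finset S) (x : BoundedContinuousFunction S ℝ) (s : S) : ℝ :=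
  (∑ h ∈ F, x (h * s)) / F.card

/-- A generalized limit on `ℓ∞(S)`: a positive, normalized, left translation invariant
linear functional. -/
def IsGenLimit {S : Type*} [Semigroup S] [TopologicalSpace S] [DiscreteTopology S]
    (Θ : BoundedContinuousFunction S ℝ →ₗ[ℝ] ℝ) : Prop :=
  (∀ x : BoundedContinuousFunction S ℝ, (∀ s, 0 ≤ x s) → 0 ≤ Θ x) ∧
  (Θ (BoundedContinuousFunction.const S (1:ℝ)) = 1) ∧
  ∀ (s₀ : S) (x : BoundedContinuousFunction S ℝ),
    Θ (x.compContinuous ⟨fun s => s₀ * s, continuous_of_discreteTopology⟩) = Θ x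

lemma aux_sum {S : Type*} [Semigroup S] [DecidableEq S] (A : Finset S) (s : S) (f : S → ℝ)
    (C : ℝ) (hf : ∀ t, |f t| ≤ C) :
    ∑ h ∈ A, f (s * h) - ∑ h ∈ A, f h
      ≤ 2 * C * (symmDiff (A.image (fun h => s * h)) A).card := by
  set B := A.image (fun h => s * h) with hB
  have hC : 0 ≤ C := by
    by_cases hA : A.Nonempty
    · obtain ⟨a, _⟩ := hA
      exact (abs_nonneg _).trans (hf a)
    · exact (abs_nonneg _).trans (hf s)
  have h1 : ∑ b ∈ B, (C - f b) ≤ ∑ h ∈ A, (C - f (s * h)) := by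
    rw [← Finset.sum_fiberwise_of_maps_to (s := A) (t := B) (g := fun h => s * h)
      (fun h hh => Finset.mem_image_of_mem _ hh)]
    apply Finset.sum_le_sum
    intro b hb
    obtain ⟨a, ha, rfl⟩ := Finset.mem_image.1 hb
    refine Finset.single_le_sum (f := fun h => C - f (s * h)) (fun i _ => ?_)
      (Finset.mem_filter.2 ⟨ha, rfl⟩)
    have := (abs_le.1 (hf (s * i))).2
    linarith
  simp only [Finset.sum_sub_distrib, Finset.sum_const, nsmul_eq_mul] at h1
  have h2 := Finset.sum_sdiff_sub_sum_sdiff (s₁ := A) (s₂ := B) (f := f)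
  have h3 : ∑ b ∈ B \ A, f b ≤ (B \ A).card * C := by
    rw [← nsmul_eq_mul]
    exact Finset.sum_le_card_nsmul _ _ _ (fun b _ => (abs_le.1 (hf b)).2)
  have h4 : (A \ B).card * (-C) ≤ ∑ b ∈ A \ B, f b := by
    rw [← nsmul_eq_mul]
    exact Finset.card_nsmul_le_sum _ _ _ (fun b _ => (abs_le.1 (hf b)).1)
  have h5 : ((symmDiff B A).card : ℝ) = (B \ A).card + (A \ B).card := by
    rw [← Nat.cast_add, ← Finset.card_union_of_disjoint disjoint_sdiff_sdiff]
    rfl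
  have h6 : (A.card : ℝ) ≤ B.card + (A \ B).card := by
    have := Finset.le_card_sdiff B A
    have : A.card ≤ B.card + (A \ B).card := by omega
    exact_mod_cast this
  rw [h5]
  have h7 : (A.card : ℝ) * C ≤ (B.card + (A \ B).card) * C := by gcongr
  have h8 : (0:ℝ) ≤ (B \ A).card * C := by positivity
  linarith

lemma aux_abs {S : Type*} [Semigroup S] [TopologicalSpace S] (A : Finset S) (hA : A.Nonempty)
    (x : BoundedContinuousFunction S ℝ) (s : S) : |folnerAvg A x s| ≤ ‖x‖ := by
  unfold folnerAvg
  have hc : (0:ℝ) < A.card := by exact_mod_cast hA.card_pos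
  rw [abs_div, abs_of_pos hc, div_le_iff₀ hc]
  refine (Finset.abs_sum_le_sum_abs _ _).trans ?_
  refine (Finset.sum_le_card_nsmul _ _ ‖x‖ (fun h _ => x.norm_coe_le_norm _)).trans ?_
  rw [nsmul_eq_mul, mul_comm]

lemma aux_bdd {S : Type*} [Semigroup S] [TopologicalSpace S] (A : Finset S) (hA : A.Nonempty)
    (x : BoundedContinuousFunction S ℝ) : BddAbove (Set.range fun s => folnerAvg A x s) :=
  ⟨‖x‖, by rintro _ ⟨s, rfl⟩; exact (abs_le.1 (aux_abs A hA x s)).2⟩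

lemma aux_sup {S : Type*} [Semigroup S] [TopologicalSpace S] (A : Finset S) (hA : A.Nonempty)
    (x : BoundedContinuousFunction S ℝ) : |⨆ s : S, folnerAvg A x s| ≤ ‖x‖ := by
  obtain ⟨a, _⟩ := id hA
  have : Nonempty S := ⟨a⟩
  rw [abs_le]
  exact ⟨((abs_le.1 (aux_abs A hA x a)).1).trans (le_ciSup (aux_bdd A hA x) a),
    ciSup_le fun s => (abs_le.1 (aux_abs A hA x s)).2⟩

lemma aux_limsup {S : Type*} [Semigroup S] [TopologicalSpace S] (F : ℕ → Finset S)
    (hF : ∀ k, (F k).Nonempty) (x : BoundedContinuousFunction S ℝ) (c : ℕ → ℝ) (L : ℝ)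
    (hc : Tendsto c atTop (nhds L)) (h : ∀ k s, folnerAvg (F k) x s ≤ c k) :
    limsup (fun k => ⨆ s : S, folnerAvg (F k) x s) atTop ≤ L := by
  obtain ⟨a, _⟩ := hF 0
  have : Nonempty S := ⟨a⟩
  rw [← hc.limsup_eq]
  refine limsup_le_limsup (Eventually.of_forall fun k => ciSup_le (h k)) ?_ ?_
  · exact (isBoundedUnder_of ⟨-‖x‖, fun k => (abs_le.1 (aux_sup (F k) (hF k) x)).1⟩
      : IsBoundedUnder (· ≥ ·) _ _).isCoboundedUnder_le
  · exact hc.isBoundedUnder_le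

theorem generalized_limit_characterization
    {S : Type*} [Semigroup S] [Countable S] [DecidableEq S]
    [TopologicalSpace S] [DiscreteTopology S]
    (F : ℕ → Finset S) (hF : IsFolner F)
    (Θ : BoundedContinuousFunction S ℝ →ₗ[ℝ] ℝ) :
    (IsGenLimit Θ ↔
      ∀ x : BoundedContinuousFunction S ℝ,
        Θ x ≤ liminf (fun k => ⨆ s : S, folnerAvg (F k) x s) atTop) ∧
    ((∀ x : BoundedContinuousFunction S ℝ,
        Θ x ≤ liminf (fun k => ⨆ s : S, folnerAvg (F k) x s) atTop) ↔
      (∀ x : BoundedContinuousFunction S ℝ,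
        Θ x ≤ limsup (fun k => ⨆ s : S, folnerAvg (F k) x s) atTop)) := by
  obtain ⟨hne, hfol⟩ := hF
  obtain ⟨a, _⟩ := id (hne 0)
  have hS : Nonempty S := ⟨a⟩
  have hbu : ∀ x : BoundedContinuousFunction S ℝ, IsBoundedUnder (· ≤ ·) atTop
      (fun k => ⨆ s : S, folnerAvg (F k) x s) := fun x =>
    isBoundedUnder_of ⟨‖x‖, fun k => (abs_le.1 (aux_sup (F k) (hne k) x)).2⟩
  have hbl : ∀ x : BoundedContinuousFunction S ℝ, IsBoundedUnder (· ≥ ·) atTop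
      (fun k => ⨆ s : S, folnerAvg (F k) x s) := fun x =>
    isBoundedUnder_of ⟨-‖x‖, fun k => (abs_le.1 (aux_sup (F k) (hne k) x)).1⟩
  have h12 : IsGenLimit Θ → ∀ x : BoundedContinuousFunction S ℝ,
        Θ x ≤ liminf (fun k => ⨆ s : S, folnerAvg (F k) x s) atTop := by
    rintro ⟨hpos, hone, hinv⟩ x
    refine le_liminf_of_le (hbu x).isCoboundedUnder_ge (Eventually.of_forall fun k => ?_)
    have hc : (0:ℝ) < (F k).card := by exact_mod_cast (hne k).card_pos
    set M := ⨆ s : S, folnerAvg (F k) x s with hM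
    have key := hpos (M • BoundedContinuousFunction.const S (1:ℝ) - ((F k).card : ℝ)⁻¹ •
      ∑ h ∈ F k, x.compContinuous ⟨fun s => h * s, continuous_of_discreteTopology⟩) ?_
    · rw [map_sub, map_smul, map_smul, map_sum, hone, Finset.sum_congr rfl fun h _ => hinv h x,
        Finset.sum_const, nsmul_eq_mul, smul_eq_mul, smul_eq_mul,
        inv_mul_cancel_left₀ hc.ne'] at key
      linarith
    · intro s
      have := le_ciSup (aux_bdd (F k) (hne k) x) s
      simp only [folnerAvg, div_eq_inv_mul] at this hM
      simp [BoundedContinuousFunction.sum_apply]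
      rw [hM]
      exact this
  have h23 : (∀ x : BoundedContinuousFunction S ℝ,
        Θ x ≤ liminf (fun k => ⨆ s : S, folnerAvg (F k) x s) atTop) →
      (∀ x : BoundedContinuousFunction S ℝ,
        Θ x ≤ limsup (fun k => ⨆ s : S, folnerAvg (F k) x s) atTop) := fun h x =>
    (h x).trans (liminf_le_limsup (hbu x) (hbl x))
  have h31 : (∀ x : BoundedContinuousFunction S ℝ,
        Θ x ≤ limsup (fun k => ⨆ s : S, folnerAvg (F k) x s) atTop) → IsGenLimit Θ := by
    intro h
    have hinv : ∀ (s₀ : S) (x : BoundedContinuousFunction S ℝ),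
        Θ (x.compContinuous ⟨fun s => s₀ * s, continuous_of_discreteTopology⟩) ≤ Θ x := by
      intro s₀ x
      have := (h (x.compContinuous ⟨fun s => s₀ * s, continuous_of_discreteTopology⟩ - x)).trans
        (aux_limsup F hne _ _ _ ((hfol s₀).const_mul (2 * ‖x‖)) fun k s => ?_)
      · rw [map_sub] at this
        linarith
      · have hc : (0:ℝ) < (F k).card := by exact_mod_cast (hne k).card_pos
        have := aux_sum (F k) s₀ (fun h => x (h * s)) ‖x‖ (fun t => x.norm_coe_le_norm _)
        unfold folnerAvg
        rw [← mul_div_assoc]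
        gcongr
        simpa [Finset.sum_sub_distrib, mul_assoc] using this
    refine ⟨fun x hx => ?_, le_antisymm ?_ ?_, fun s₀ x => le_antisymm (hinv s₀ x) ?_⟩
    · have := (h (-x)).trans (aux_limsup F hne _ _ 0 tendsto_const_nhds fun k s => ?_)
      · rw [map_neg] at this
        linarith
      · unfold folnerAvg
        refine div_nonpos_of_nonpos_of_nonneg (Finset.sum_nonpos fun i _ => ?_) (by positivity)
        simpa using hx _
    · refine (h _).trans (aux_limsup F hne _ _ 1 tendsto_const_nhds fun k s => ?_)
      have hc : ((F k).card : ℝ) ≠ 0 := by exact_mod_cast (hne k).card_pos.ne'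
      simp [folnerAvg, hc]
    · have := (h (-BoundedContinuousFunction.const S (1:ℝ))).trans
        (aux_limsup F hne _ _ (-1) tendsto_const_nhds fun k s => ?_)
      · rw [map_neg] at this
        linarith
      · have hc : ((F k).card : ℝ) ≠ 0 := by exact_mod_cast (hne k).card_pos.ne'
        simp [folnerAvg, hc, neg_div]
    · have := hinv s₀ (-x)
      have e : (-x).compContinuous ⟨fun s => s₀ * s, continuous_of_discreteTopology⟩
        = -(x.compContinuous ⟨fun s => s₀ * s, continuous_of_discreteTopology⟩) := by
        ext; simp
      rw [e, map_neg, map_neg] at this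
      linarith
  exact ⟨⟨h12, fun h => h31 (h23 h)⟩, ⟨h23, fun h => h12 (h31 h)⟩⟩
end

section
/- Let Σ be a countable semigroup admitting a Følner sequence (Σ_k)_{k≥1}. Then for every x⋆ ∈ ℓ∞(Σ) there exists a generalized limit Θ⋆ : ℓ∞(Σ) → ℝ such that Θ⋆(x⋆) = limsup_{k→∞} ( sup_{s∈Σ} (1/|Σ_k|) Σ_{h∈Σ_k} x⋆_{hs} ). -/
open Filter BoundedContinuousFunction

theorem folnerAvg_abs_le {S : Type*} [Semigroup S] [TopologicalSpace S]
    (F : Finset S) (hF : F.Nonempty) (x : BoundedContinuousFunction S ℝ) (s : S) :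
    |folnerAvg F x s| ≤ ‖x‖ := by
  have hc : (0:ℝ) < F.card := by exact_mod_cast hF.card_pos
  unfold folnerAvg
  rw [abs_div, abs_of_pos hc, div_le_iff₀ hc]
  calc |∑ h ∈ F, x (h * s)| ≤ ∑ h ∈ F, |x (h * s)| := Finset.abs_sum_le_sum_abs _ _
    _ ≤ ∑ h ∈ F, ‖x‖ := Finset.sum_le_sum fun h _ => x.norm_coe_le_norm (h * s)
    _ = ‖x‖ * F.card := by simp [mul_comm]

theorem sum_diff_bound {S : Type*} [DecidableEq S] (A B : Finset S) (y : S → ℝ) (C : ℝ)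
    (hy : ∀ t, |y t| ≤ C) :
    |∑ g ∈ A, y g - ∑ g ∈ B, y g| ≤ C * (symmDiff A B).card := by
  have h1 : ∑ g ∈ A, y g - ∑ g ∈ B, y g = ∑ g ∈ A \ B, y g - ∑ g ∈ B \ A, y g := by
    have e1 := Finset.sum_inter_add_sum_sdiff A B y
    have e2 := Finset.sum_inter_add_sum_sdiff B A y
    rw [Finset.inter_comm] at e2
    linarith
  have h2 : ∀ D : Finset S, |∑ g ∈ D, y g| ≤ C * D.card := fun D =>
    calc |∑ h ∈ D, y h| ≤ ∑ h ∈ D, |y h| := Finset.abs_sum_le_sum_abs _ _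
      _ ≤ ∑ h ∈ D, C := Finset.sum_le_sum fun h _ => hy h
      _ = C * D.card := by simp [mul_comm]
  have h3 : (symmDiff A B).card = (A \ B).card + (B \ A).card := by
    rw [symmDiff_def, Finset.sup_eq_union, Finset.card_union_of_disjoint]
    exact disjoint_sdiff_sdiff
  rw [h1, h3]
  push_cast
  have := abs_sub (∑ g ∈ A \ B, y g) (∑ g ∈ B \ A, y g)
  have := h2 (A \ B)
  have := h2 (B \ A)
  linarith

theorem sum_image_bound {S : Type*} [DecidableEq S] (F : Finset S) (f : S → S)
    (y : S → ℝ) (C : ℝ) (hy : ∀ t, |y t| ≤ C) :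
    |∑ h ∈ F, y (f h) - ∑ g ∈ F.image f, y g| ≤ C * (F.card - (F.image f).card) := by
  have e1 : ∑ h ∈ F, y (f h) = ∑ g ∈ F.image f, ((F.filter (fun h => f h = g)).card : ℝ) * y g := by
    rw [Finset.sum_comp]
    simp
  have e2 : (F.card : ℝ) = ∑ g ∈ F.image f, ((F.filter (fun h => f h = g)).card : ℝ) := by
    exact_mod_cast Finset.card_eq_sum_card_image f F
  have e3 : ((F.image f).card : ℝ) = ∑ g ∈ F.image f, (1:ℝ) := by simp
  rw [e1, e2, e3, ← Finset.sum_sub_distrib, ← Finset.sum_sub_distrib, Finset.mul_sum]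
  refine (Finset.abs_sum_le_sum_abs _ _).trans (Finset.sum_le_sum fun g hg => ?_)
  have h1 : (1:ℝ) ≤ ((F.filter (fun h => f h = g)).card : ℝ) := by
    obtain ⟨h, hh, rfl⟩ := Finset.mem_image.1 hg
    have : 0 < (F.filter (fun h' => f h' = f h)).card :=
      Finset.card_pos.2 ⟨h, by simp [hh]⟩
    exact_mod_cast this
  set m := ((F.filter (fun h => f h = g)).card : ℝ)
  rw [show m * y g - y g = y g * (m - 1) by ring, abs_mul, abs_of_nonneg (sub_nonneg.2 h1)]
  exact mul_le_mul_of_nonneg_right (hy g) (sub_nonneg.2 h1)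

theorem sum_translate_bound {S : Type*} [DecidableEq S] (F : Finset S) (f : S → S)
    (y : S → ℝ) (C : ℝ) (hC : 0 ≤ C) (hy : ∀ t, |y t| ≤ C) :
    |∑ h ∈ F, y (f h) - ∑ g ∈ F, y g| ≤ 2 * C * (symmDiff (F.image f) F).card := by
  have h1 := sum_image_bound F f y C hy
  have h2 := sum_diff_bound (F.image f) F y C hy
  have h3 : (F.card : ℝ) - (F.image f).card ≤ (symmDiff (F.image f) F).card := by
    have a := Finset.le_card_sdiff (F.image f) F
    have b : (F \ F.image f).card ≤ (symmDiff (F.image f) F).card :=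
      Finset.card_le_card (by rw [symmDiff_def]; exact le_sup_right)
    have : F.card ≤ (symmDiff (F.image f) F).card + (F.image f).card := by omega
    have : (F.card : ℝ) ≤ (symmDiff (F.image f) F).card + (F.image f).card := by exact_mod_cast this
    linarith
  have h4 := mul_le_mul_of_nonneg_left h3 hC
  have h5 := abs_sub_le (∑ h ∈ F, y (f h)) (∑ g ∈ F.image f, y g) (∑ g ∈ F, y g)
  linarith

theorem exists_ultrafilter_limsup (u : ℕ → ℝ) (C : ℝ) (hu : ∀ k, |u k| ≤ C) :
    ∃ U : Ultrafilter ℕ, (U : Filter ℕ) ≤ atTop ∧ Tendsto u U (nhds (limsup u atTop)) := by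
  rw [← mapClusterPt_iff_ultrafilter, Metric.nhds_basis_ball.mapClusterPt_iff_frequently]
  intro ε hε
  have hb : IsBoundedUnder (· ≤ ·) atTop u := isBoundedUnder_of ⟨C, fun k => (abs_le.1 (hu k)).2⟩
  have hb' : IsBoundedUnder (· ≥ ·) atTop u := isBoundedUnder_of ⟨-C, fun k => (abs_le.1 (hu k)).1⟩
  have h1 : ∃ᶠ k in atTop, limsup u atTop - ε < u k :=
    frequently_lt_of_lt_limsup hb'.isCoboundedUnder_le (by linarith)
  have h2 : ∀ᶠ k in atTop, u k < limsup u atTop + ε :=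
    eventually_lt_of_limsup_lt (by linarith) hb
  refine (h1.and_eventually h2).mono fun k hk => ?_
  rw [Metric.mem_ball, Real.dist_eq, abs_lt]
  constructor <;> linarith [hk.1, hk.2]

theorem exists_generalized_limit_attaining_limsup
    {S : Type*} [Semigroup S] [Countable S] [DecidableEq S]
    [TopologicalSpace S] [DiscreteTopology S]
    (F : ℕ → Finset S) (hF : IsFolner F)
    (xs : BoundedContinuousFunction S ℝ) :
    ∃ Θ : BoundedContinuousFunction S ℝ →ₗ[ℝ] ℝ, IsGenLimit Θ ∧
      Θ xs = limsup (fun k => ⨆ s : S, folnerAvg (F k) xs s) atTop := by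
  obtain ⟨hne, hfol⟩ := hF
  haveI : Nonempty S := ⟨(hne 0).choose⟩
  have hab := fun k x s => abs_le.1 (folnerAvg_abs_le (F k) (hne k) x s)
  have hbdd : ∀ k, BddAbove (Set.range fun s => folnerAvg (F k) xs s) := fun k =>
    ⟨‖xs‖, by rintro _ ⟨s, rfl⟩; exact (hab k xs s).2⟩
  obtain ⟨U, hU, hlim⟩ := exists_ultrafilter_limsup
    (fun k => ⨆ s : S, folnerAvg (F k) xs s) ‖xs‖ (fun k => by
      rw [abs_le]
      exact ⟨(hab k xs (Classical.arbitrary S)).1.trans (le_ciSup (hbdd k) _),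
        ciSup_le fun s => (hab k xs s).2⟩)
  have hσ : ∀ k : ℕ, ∃ s, (⨆ s : S, folnerAvg (F k) xs s) - 1 / ((k:ℝ) + 1) < folnerAvg (F k) xs s :=
    fun k => exists_lt_of_lt_ciSup (sub_lt_self _ Nat.one_div_pos_of_nat)
  choose σ hσ using hσ
  have hex : ∀ x : BoundedContinuousFunction S ℝ,
      ∃ l, Tendsto (fun k => folnerAvg (F k) x (σ k)) U (nhds l) := by
    intro x
    obtain ⟨l, -, hl⟩ := (isCompact_Icc (a := -‖x‖) (b := ‖x‖)).ultrafilter_le_nhds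
      (U.map fun k => folnerAvg (F k) x (σ k)) (by
        rw [le_principal_iff]
        exact Filter.Eventually.of_forall (f := (U : Filter ℕ)) fun k => hab k x (σ k))
    exact ⟨l, hl⟩
  choose T hT using hex
  refine ⟨⟨⟨T, ?_⟩, ?_⟩, ⟨?_, ?_, ?_⟩, ?_⟩
  · intro x y
    refine tendsto_nhds_unique (hT (x + y)) (((hT x).add (hT y)).congr fun k => ?_)
    simp [folnerAvg, Finset.sum_add_distrib, add_div]
  · intro c x
    refine tendsto_nhds_unique (hT (c • x)) (((hT x).const_mul c).congr fun k => ?_)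
    simp [folnerAvg, ← Finset.mul_sum, mul_div_assoc]
  · intro x hx
    exact ge_of_tendsto' (hT x) fun k =>
      div_nonneg (Finset.sum_nonneg fun h _ => hx _) (Nat.cast_nonneg _)
  · refine tendsto_nhds_unique (hT _) (tendsto_const_nhds.congr fun k => ?_)
    have : ((F k).card : ℝ) ≠ 0 := by exact_mod_cast (hne k).card_pos.ne'
    simp [folnerAvg, this]
  · intro s₀ x
    have h0 : Tendsto (fun k => 2 * ‖x‖ * (((symmDiff ((F k).image (fun h => s₀ * h)) (F k)).card : ℝ)
        / (F k).card)) U (nhds 0) := by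
      simpa using ((hfol s₀).mono_left hU).const_mul (2 * ‖x‖)
    have hd := (hT (x.compContinuous ⟨fun s => s₀ * s, continuous_of_discreteTopology⟩)).sub (hT x)
    have hz := squeeze_zero_norm (fun k => ?_) h0 (f := fun k =>
      folnerAvg (F k) (x.compContinuous ⟨fun s => s₀ * s, continuous_of_discreteTopology⟩) (σ k)
        - folnerAvg (F k) x (σ k))
    · exact sub_eq_zero.1 (tendsto_nhds_unique hd hz)
    · have hc : (0:ℝ) < (F k).card := by exact_mod_cast (hne k).card_pos
      have := sum_translate_bound (F k) (fun h => s₀ * h) (fun g => x (g * σ k)) ‖x‖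
        (norm_nonneg _) (fun t => x.norm_coe_le_norm _)
      simp only [folnerAvg, ← sub_div, Real.norm_eq_abs, abs_div, abs_of_pos hc]
      rw [← mul_div_assoc]
      refine div_le_div_of_nonneg_right ?_ hc.le
      simpa [mul_assoc] using this
  · refine tendsto_nhds_unique (hT xs) ?_
    have h1 : Tendsto (fun k : ℕ => 1 / ((k:ℝ) + 1)) U (nhds 0) :=
      tendsto_one_div_add_atTop_nhds_zero_nat.mono_left hU
    refine tendsto_of_tendsto_of_tendsto_of_le_of_le (by simpa using hlim.sub h1) hlim
      (fun k => (hσ k).le) (fun k => le_ciSup (hbdd k) (σ k))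
end

section
/- Let 𝔛 be a Hausdorff topological space and let Σ be a countable subsemigroup of the semigroup of continuous self-maps of 𝔛 (under composition) that admits a Følner sequence (Σ_k)_{k≥1}. If there is a point x₀ ∈ 𝔛 and a compact subset K₀ ⊆ 𝔛 such that limsup_{k→∞} ( sup_{s∈Σ} (1/|Σ_k|) Σ_{h∈Σ_k} 1_{K₀}(h(s(x₀))) ) > 0, then there exists a Radon probability measure μ on the Borel σ-algebra of 𝔛 such that s_*μ = μ for every s ∈ Σ and μ(K₀) > 0. -/
open MeasureTheory Filter

noncomputable def lamAux {X : Type*} [TopologicalSpace X] (m : Set X → NNReal) (K : Set X) : NNReal :=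
  sInf (m '' {U | IsOpen U ∧ K ⊆ U})

lemma lamAux_le {X : Type*} [TopologicalSpace X] (m : Set X → NNReal) {K U : Set X}
    (hU : IsOpen U) (h : K ⊆ U) : lamAux m K ≤ m U :=
  csInf_le (OrderBot.bddBelow _) ⟨U, ⟨hU, h⟩, rfl⟩

lemma le_lamAux {X : Type*} [TopologicalSpace X] (m : Set X → NNReal) {K : Set X} {c : NNReal}
    (h : ∀ U, IsOpen U → K ⊆ U → c ≤ m U) : c ≤ lamAux m K := by
  refine le_csInf ⟨_, Set.univ, ⟨isOpen_univ, Set.subset_univ _⟩, rfl⟩ ?_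
  rintro _ ⟨U, ⟨h1, h2⟩, rfl⟩
  exact h U h1 h2

lemma exists_lamAux {X : Type*} [TopologicalSpace X] (m : Set X → NNReal) {K : Set X} {c : NNReal}
    (h : lamAux m K < c) : ∃ U, IsOpen U ∧ K ⊆ U ∧ m U < c := by
  by_contra! hc
  exact absurd (le_lamAux m hc) (not_le.2 h)

noncomputable def contAux {X : Type*} [TopologicalSpace X] [T2Space X] (m : Set X → NNReal)
    (hmono : ∀ A B, A ⊆ B → m A ≤ m B)
    (hsub : ∀ A B, m (A ∪ B) ≤ m A + m B)
    (hadd : ∀ A B, Disjoint A B → m (A ∪ B) = m A + m B) : Content X :=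
  have hle : ∀ K₁ K₂ : Set X, lamAux m (K₁ ∪ K₂) ≤ lamAux m K₁ + lamAux m K₂ := by
    intro K₁ K₂
    refine le_of_forall_pos_le_add fun ε hε => ?_
    have he : 0 < ε / 2 := half_pos hε
    obtain ⟨U, hU, hKU, h1⟩ := exists_lamAux m (lt_add_of_pos_right (lamAux m K₁) he)
    obtain ⟨V, hV, hKV, h2⟩ := exists_lamAux m (lt_add_of_pos_right (lamAux m K₂) he)
    calc lamAux m (K₁ ∪ K₂) ≤ m (U ∪ V) := lamAux_le m (hU.union hV) (Set.union_subset_union hKU hKV)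
      _ ≤ m U + m V := hsub _ _
      _ ≤ (lamAux m K₁ + ε / 2) + (lamAux m K₂ + ε / 2) := add_le_add h1.le h2.le
      _ = lamAux m K₁ + lamAux m K₂ + ε := by
        rw [add_add_add_comm, add_halves]
  { toFun := fun K => lamAux m (K : Set X)
    mono' := fun K₁ K₂ h => le_lamAux m fun U hU hKU => lamAux_le m hU (h.trans hKU)
    sup_disjoint' := by
      intro K₁ K₂ hd _ _
      refine le_antisymm (hle _ _) (le_lamAux m fun U hU hKU => ?_)
      obtain ⟨V₁, V₂, hV₁, hV₂, h1, h2, hdV⟩ :=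
        SeparatedNhds.of_isCompact_isCompact K₁.isCompact K₂.isCompact hd
      have hKU' : (K₁ : Set X) ∪ K₂ ⊆ U := hKU
      calc lamAux m (K₁ : Set X) + lamAux m (K₂ : Set X) ≤ m (U ∩ V₁) + m (U ∩ V₂) :=
            add_le_add
              (lamAux_le m (hU.inter hV₁) (Set.subset_inter (Set.subset_union_left.trans hKU') h1))
              (lamAux_le m (hU.inter hV₂) (Set.subset_inter (Set.subset_union_right.trans hKU') h2))
        _ = m (U ∩ V₁ ∪ U ∩ V₂) := (hadd _ _ (hdV.mono Set.inter_subset_right Set.inter_subset_right)).symm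
        _ ≤ m U := hmono _ _ (Set.union_subset Set.inter_subset_left Set.inter_subset_left)
    sup_le' := fun K₁ K₂ => hle _ _ }

lemma radon_of_mean {X : Type*} [TopologicalSpace X] [T2Space X] [MeasurableSpace X] [BorelSpace X]
    (S : Set (X → X)) (hcont : ∀ f ∈ S, Continuous f) (m : Set X → NNReal)
    (hmono : ∀ A B, A ⊆ B → m A ≤ m B)
    (hsub : ∀ A B, m (A ∪ B) ≤ m A + m B)
    (hadd : ∀ A B, Disjoint A B → m (A ∪ B) = m A + m B)
    (hinv : ∀ s ∈ S, ∀ A, m (s ⁻¹' A) ≤ m A)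
    (K₀ : Set X) (hK₀ : IsCompact K₀) (hpos : 0 < m K₀) :
    ∃ μ : Measure X, IsProbabilityMeasure μ ∧
      (∀ K : Set X, IsCompact K → μ K < ⊤) ∧
      μ.InnerRegularWRT IsCompact MeasurableSet ∧
      (∀ s ∈ S, Measure.map s μ = μ) ∧
      0 < μ K₀ := by
  set c := contAux m hmono hsub hadd with hc
  have hcK : ∀ K : TopologicalSpace.Compacts X, c K = (lamAux m (K : Set X) : ENNReal) := fun K => rfl
  have hopen : ∀ U : Set X, IsOpen U → c.measure U ≤ m U := by
    intro U hU
    rw [c.measure_apply hU.measurableSet, c.outerMeasure_of_isOpen U hU]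
    refine iSup₂_le fun K hK => ?_
    rw [hcK]
    exact_mod_cast lamAux_le m hU hK
  have hfin : IsFiniteMeasure c.measure :=
    ⟨(hopen _ isOpen_univ).trans_lt ENNReal.coe_lt_top⟩
  have hcomp : ∀ K : Set X, IsCompact K → c.measure K = lamAux m K := by
    intro K hK
    apply le_antisymm
    · by_contra! hlt
      have hne : c.measure K ≠ ⊤ := measure_ne_top _ _
      lift c.measure K to NNReal using hne with r hr
      obtain ⟨U, hU, hKU, h1⟩ := exists_lamAux m (ENNReal.coe_lt_coe.1 hlt)
      have := (measure_mono hKU).trans (hopen U hU)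
      rw [← hr] at this
      exact absurd (ENNReal.coe_le_coe.1 this) (not_le.2 h1)
    · rw [c.measure_apply hK.measurableSet]
      exact c.le_outerMeasure_compacts ⟨K, hK⟩
  have hreg : c.measure.Regular := by
    refine { lt_top_of_isCompact := fun K hK => measure_lt_top _ _, innerRegular := ?_ }
    intro U hU r hr
    rw [c.measure_apply hU.measurableSet, c.outerMeasure_of_isOpen U hU] at hr
    simp only [Content.innerContent, lt_iSup_iff] at hr
    obtain ⟨K, hKU, hr⟩ := hr
    refine ⟨K, hKU, K.isCompact, ?_⟩
    rw [hcomp _ K.isCompact]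
    exact hr
  have hir : c.measure.InnerRegularWRT IsCompact MeasurableSet :=
    Measure.InnerRegular.innerRegular
  have hmap : ∀ s ∈ S, Measure.map s c.measure = c.measure := by
    intro s hs
    have hsm := (hcont s hs).measurable
    refine Measure.eq_of_le_of_measure_univ_eq (Measure.le_iff.2 fun A hA => ?_) ?_
    · rw [Measure.map_apply hsm hA]
      refine le_of_forall_lt fun r hr => ?_
      obtain ⟨K, hKA, hK, hrK⟩ := hir (hsm hA) r hr
      refine hrK.trans_le ?_
      have hsK := hK.image (hcont s hs)
      refine le_trans ?_ (measure_mono (Set.image_subset_iff.2 hKA))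
      rw [hcomp _ hK, hcomp _ hsK]
      refine ENNReal.coe_le_coe.2 (le_lamAux m fun U hU hKU => ?_)
      exact (lamAux_le m (hU.preimage (hcont s hs)) (Set.image_subset_iff.1 hKU)).trans (hinv s hs U)
    · rw [Measure.map_apply hsm MeasurableSet.univ, Set.preimage_univ]
  have h0 : 0 < c.measure K₀ := by
    rw [hcomp _ hK₀]
    exact ENNReal.coe_pos.2 (hpos.trans_le (le_lamAux m fun U _ h => hmono _ _ h))
  have hu0 : c.measure Set.univ ≠ 0 := (h0.trans_le (measure_mono (Set.subset_univ _))).ne'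
  have hut : c.measure Set.univ ≠ ⊤ := measure_ne_top _ _
  have hp : IsProbabilityMeasure ((c.measure Set.univ)⁻¹ • c.measure) :=
    ⟨by simp [ENNReal.inv_mul_cancel hu0 hut]⟩
  refine ⟨(c.measure Set.univ)⁻¹ • c.measure, hp, fun K _ => measure_lt_top _ _, hir.smul _, ?_, ?_⟩
  · intro s hs
    rw [Measure.map_smul, hmap s hs]
  · rw [Measure.smul_apply, smul_eq_mul]
    exact ENNReal.mul_pos (ENNReal.inv_ne_zero.2 hut) h0.ne'

lemma sum_comp_ge {X : Type*} [DecidableEq (X → X)] (F : Finset (X → X)) (s : X → X)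
    (a : (X → X) → ℝ) (h0 : ∀ h, 0 ≤ a h) (h1 : ∀ h, a h ≤ 1) :
    ∑ h ∈ F, a h ≤ ∑ h ∈ F, a (s ∘ h)
      + (symmDiff (F.image (fun h => s ∘ h)) F).card := by
  have e1 : ∑ g ∈ F.image (fun h => s ∘ h), a g ≤ ∑ h ∈ F, a (s ∘ h) := by
    rw [← Finset.sum_fiberwise_of_maps_to (s := F) (t := F.image (fun h => s ∘ h))
      (g := fun h => s ∘ h) (fun h hh => Finset.mem_image_of_mem _ hh)]
    refine Finset.sum_le_sum fun g hg => ?_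
    obtain ⟨h, hh, rfl⟩ := Finset.mem_image.1 hg
    exact Finset.single_le_sum (f := fun h => a (s ∘ h)) (fun i _ => h0 _)
      (Finset.mem_filter.2 ⟨hh, rfl⟩)
  have e2 : ∑ h ∈ F, a h ≤ ∑ g ∈ F.image (fun h => s ∘ h), a g
      + ∑ g ∈ symmDiff (F.image (fun h => s ∘ h)) F, a g := by
    rw [← Finset.sum_union_inter]
    refine le_add_of_le_of_nonneg ?_ (Finset.sum_nonneg fun i _ => h0 i)
    refine Finset.sum_le_sum_of_subset_of_nonneg ?_ (fun i _ _ => h0 i)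
    intro x hx
    by_cases hx' : x ∈ F.image (fun h => s ∘ h)
    · exact Finset.mem_union_left _ hx'
    · exact Finset.mem_union_right _ (Finset.mem_symmDiff.2 (Or.inr ⟨hx, hx'⟩))
  have e3 : ∑ g ∈ symmDiff (F.image (fun h => s ∘ h)) F, a g
      ≤ (symmDiff (F.image (fun h => s ∘ h)) F).card := by
    simpa using Finset.sum_le_card_nsmul _ a 1 (fun i _ => h1 i)
  linarith

theorem exists_invariant_radon_measure
    {𝔛 : Type*} [TopologicalSpace 𝔛] [T2Space 𝔛] [MeasurableSpace 𝔛] [BorelSpace 𝔛]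
    [DecidableEq (𝔛 → 𝔛)]
    (S : Set (𝔛 → 𝔛)) (hcount : S.Countable)
    (hcont : ∀ f ∈ S, Continuous f)
    (hcomp : ∀ f ∈ S, ∀ g ∈ S, f ∘ g ∈ S)
    (F : ℕ → Finset (𝔛 → 𝔛)) (hFS : ∀ k, ↑(F k) ⊆ S) (hFne : ∀ k, (F k).Nonempty)
    (hFolner : ∀ s ∈ S, Tendsto
      (fun k => ((symmDiff ((F k).image (fun h => s ∘ h)) (F k)).card : ℝ) / (F k).card)
      atTop (nhds 0))
    (x₀ : 𝔛) (K₀ : Set 𝔛) (hK₀ : IsCompact K₀)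
    (hpos : 0 < atTop.limsup (fun k : ℕ =>
      ⨆ s ∈ S, (∑ h ∈ F k, K₀.indicator (fun _ => (1:ℝ)) (h (s x₀))) / (F k).card)) :
    ∃ μ : Measure 𝔛, IsProbabilityMeasure μ ∧
      (∀ K : Set 𝔛, IsCompact K → μ K < ⊤) ∧
      μ.InnerRegularWRT IsCompact MeasurableSet ∧
      (∀ s ∈ S, Measure.map s μ = μ) ∧
      0 < μ K₀ := by

  classical
  set v : ℕ → Set 𝔛 → 𝔛 → ℝ := fun k A y =>
    (∑ h ∈ F k, A.indicator (fun _ => (1:ℝ)) (h y)) / (F k).card with hv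
  have hcard : ∀ k, (0:ℝ) < (F k).card := fun k => by exact_mod_cast (hFne k).card_pos
  have hi0 : ∀ (A : Set 𝔛) y, 0 ≤ A.indicator (fun _ => (1:ℝ)) y :=
    fun A y => Set.indicator_nonneg (fun _ _ => zero_le_one) y
  have hi1 : ∀ (A : Set 𝔛) y, A.indicator (fun _ => (1:ℝ)) y ≤ 1 := fun A y =>
    Set.indicator_le_self' (fun _ _ => zero_le_one) y
  have hv0 : ∀ k A y, 0 ≤ v k A y := fun k A y =>
    div_nonneg (Finset.sum_nonneg fun h _ => hi0 A _) (hcard k).le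
  have hvuniv : ∀ k y, v k Set.univ y = 1 := fun k y => by
    simp [hv, (hcard k).ne']
  have hvmono : ∀ k A B y, A ⊆ B → v k A y ≤ v k B y := fun k A B y h => by
    refine div_le_div_of_nonneg_right (Finset.sum_le_sum fun g _ => ?_) (hcard k).le
    exact Set.indicator_le_indicator_of_subset h (fun _ => zero_le_one) _
  have hv1 : ∀ k A y, v k A y ≤ 1 := fun k A y =>
    (hvmono k A Set.univ y (Set.subset_univ _)).trans (hvuniv k y).le
  have hvadd : ∀ k A B y, Disjoint A B → v k (A ∪ B) y = v k A y + v k B y := fun k A B y h => by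
    simp only [hv]
    rw [← add_div, ← Finset.sum_add_distrib, Set.indicator_union_of_disjoint h]
  -- a good level
  obtain ⟨c, hc0, hc⟩ := exists_between hpos
  have hfreq : ∃ᶠ k in atTop, ∃ y, c < v k K₀ y := by
    refine (frequently_lt_of_lt_limsup ?_ hc).mono ?_
    · refine isCoboundedUnder_le_of_le atTop (x := 0) fun k => ?_
      exact Real.iSup_nonneg fun s => Real.iSup_nonneg fun _ => hv0 k K₀ (s x₀)
    · intro k hk
      haveI : Nonempty (𝔛 → 𝔛) := ⟨id⟩
      obtain ⟨s, hs⟩ := exists_lt_of_lt_ciSup hk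
      by_cases hsS : s ∈ S
      · rw [ciSup_pos hsS] at hs
        exact ⟨s x₀, hs⟩
      · exfalso
        haveI : IsEmpty (s ∈ S) := ⟨hsS⟩
        rw [Real.iSup_of_isEmpty] at hs
        linarith
  have hy : ∀ k, ∃ y, (∃ y, c < v k K₀ y) → c < v k K₀ y := fun k => by
    by_cases h : ∃ y, c < v k K₀ y
    · exact ⟨h.choose, fun _ => h.choose_spec⟩
    · exact ⟨x₀, fun h' => absurd h' h⟩
  choose y hy using hy
  haveI hne : (atTop ⊓ 𝓟 {k : ℕ | ∃ y, c < v k K₀ y}).NeBot := frequently_mem_iff_neBot.1 hfreq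
  set U : Ultrafilter ℕ := Ultrafilter.of (atTop ⊓ 𝓟 {k : ℕ | ∃ y, c < v k K₀ y}) with hU
  have hUle : (U : Filter ℕ) ≤ atTop ⊓ 𝓟 {k : ℕ | ∃ y, c < v k K₀ y} := Ultrafilter.of_le _
  have hUtop : (U : Filter ℕ) ≤ atTop := hUle.trans inf_le_left
  have hUgood : ∀ᶠ k in (U : Filter ℕ), c < v k K₀ (y k) := by
    have : {k : ℕ | ∃ y, c < v k K₀ y} ∈ (U : Filter ℕ) :=
      (hUle.trans inf_le_right) (mem_principal_self _)
    exact Filter.mem_of_superset this fun k hk => hy k hk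
  have hlim : ∀ A : Set 𝔛, ∃ l : NNReal,
      Tendsto (fun k => v k A (y k)) (U : Filter ℕ) (nhds (l : ℝ)) := fun A => by
    obtain ⟨l, hl, hle⟩ := (isCompact_Icc (a := (0:ℝ)) (b := 1)).ultrafilter_le_nhds
      (U.map fun k => v k A (y k)) (by
        rw [le_principal_iff]
        exact Filter.mem_map.2 (Filter.univ_mem' fun k => ⟨hv0 _ _ _, hv1 _ _ _⟩))
    exact ⟨⟨l, hl.1⟩, hle⟩
  choose m hm using hlim
  have hmmono : ∀ A B, A ⊆ B → m A ≤ m B := fun A B h =>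
    NNReal.coe_le_coe.1 (le_of_tendsto_of_tendsto' (hm A) (hm B) fun k => hvmono k A B _ h)
  have hmadd : ∀ A B, Disjoint A B → m (A ∪ B) = m A + m B := fun A B h => by
    apply NNReal.coe_injective
    rw [NNReal.coe_add]
    refine tendsto_nhds_unique (hm (A ∪ B)) (((hm A).add (hm B)).congr fun k => ?_)
    exact (hvadd k A B _ h).symm
  have hmuniv : m Set.univ = 1 := by
    apply NNReal.coe_injective
    refine tendsto_nhds_unique (hm Set.univ) (tendsto_const_nhds.congr fun k => ?_)
    simp [hvuniv]
  have hmsub : ∀ A B, m (A ∪ B) ≤ m A + m B := fun A B => by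
    rw [← Set.union_diff_self, hmadd _ _ Set.disjoint_sdiff_right]
    gcongr
    exact hmmono _ _ Set.diff_subset
  have hmge : ∀ s ∈ S, ∀ A, m A ≤ m (s ⁻¹' A) := fun s hs A => by
    apply NNReal.coe_le_coe.1
    have h2 := (hm (s ⁻¹' A)).add ((hFolner s hs).mono_left hUtop)
    rw [add_zero] at h2
    refine le_of_tendsto_of_tendsto' (hm A) h2 fun k => ?_
    simp only [hv]
    rw [← add_div]
    refine div_le_div_of_nonneg_right ?_ (hcard k).le
    exact sum_comp_ge (F k) s (fun h => A.indicator (fun _ => (1:ℝ)) (h (y k)))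
      (fun h => hi0 _ _) (fun h => hi1 _ _)
  have hmle : ∀ s ∈ S, ∀ A, m (s ⁻¹' A) ≤ m A := fun s hs A => by
    have h1 := hmadd A Aᶜ disjoint_compl_right
    have h2 := hmadd (s ⁻¹' A) (s ⁻¹' A)ᶜ disjoint_compl_right
    rw [Set.union_compl_self, hmuniv] at h1 h2
    have h3 := hmge s hs Aᶜ
    rw [Set.preimage_compl] at h3
    rw [h1] at h2
    have h2' := congrArg NNReal.toReal h2
    push_cast at h2'
    have h3' := NNReal.coe_le_coe.2 h3
    apply NNReal.coe_le_coe.1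
    linarith
  have hmpos : 0 < m K₀ := by
    apply NNReal.coe_pos.1
    refine hc0.trans_le (ge_of_tendsto (hm K₀) (hUgood.mono fun k hk => hk.le))
  exact radon_of_mean S hcont m hmmono hmsub hmadd hmle K₀ hK₀ hmpos
end

section
/- Let (X,d) be a complete metric space, let σ be a conical geodesic bicombing on X with the midpoint property, and let Σ be a countable subsemigroup of the semigroup of 1-Lipschitz self-maps of X such that every element of Σ is σ-equivariant and Σ admits a Følner sequence (Σ_k)_{k≥1}. If there is a point x₀ ∈ X and a compact subset K₀ ⊆ X such that the set A := {s(x₀) : s ∈ Σ} is bounded and limsup_{k→∞} ( sup_{s∈Σ} (1/|Σ_k|) Σ_{h∈Σ_k} 1_{K₀}(h(s(x₀))) ) > 0, then there exists a point x⋆ ∈ cl conv_σ(A) such that s(x⋆) = x⋆ for every s ∈ Σ. -/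
open Set

open Filter Topology

def SCvx {X : Type*} [MetricSpace X] (σ : X → X → ℝ → X) (W : Set X) : Prop :=
  ∀ x ∈ W, ∀ y ∈ W, ∀ t ∈ Icc (0:ℝ) 1, σ x y t ∈ W

lemma convSigma_min {X : Type*} [MetricSpace X] {σ : X → X → ℝ → X} {A W : Set X}
    (hA : A ⊆ W) (hW : SCvx σ W) : convSigma σ A ⊆ W := by
  apply iUnion_subset
  intro k
  induction k with
  | zero => exact hA
  | succ k ih =>
    rintro z ⟨x, hx, y, hy, t, ht, rfl⟩
    exact hW x (ih hx) y (ih hy) t ht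

lemma subset_convSigma {X : Type*} [MetricSpace X] {σ : X → X → ℝ → X} {A : Set X} :
    A ⊆ convSigma σ A := fun x hx => mem_iUnion.2 ⟨0, hx⟩

lemma convSigma_SCvx {X : Type*} [MetricSpace X] {σ : X → X → ℝ → X}
    (hσ : IsConicalBicombing σ) (A : Set X) : SCvx σ (convSigma σ A) := by
  have hmono : Monotone (convSigmaSets σ A) := by
    apply monotone_nat_of_le_succ
    intro k x hx
    exact ⟨x, hx, x, hx, 0, by simp, (hσ.1 x x).symm⟩
  intro x hx y hy t ht
  obtain ⟨i, hi⟩ := mem_iUnion.1 hx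
  obtain ⟨j, hj⟩ := mem_iUnion.1 hy
  exact mem_iUnion.2 ⟨max i j + 1, x, hmono (le_max_left i j) hi, y,
    hmono (le_max_right i j) hj, t, ht, rfl⟩

lemma closure_SCvx {X : Type*} [MetricSpace X] {σ : X → X → ℝ → X}
    (hσ : IsConicalBicombing σ) {W : Set X} (hW : SCvx σ W) : SCvx σ (closure W) := by
  intro x hx y hy t ht
  rw [Metric.mem_closure_iff] at *
  intro ε hε
  obtain ⟨a, ha, hxa⟩ := hx (ε/2) (by positivity)
  obtain ⟨b, hb, hyb⟩ := hy (ε/2) (by positivity)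
  refine ⟨σ a b t, hW a ha b hb t ht, ?_⟩
  have := hσ.2.2.2 x a y b t ht
  have h1 : (1 - t) * dist x a ≤ (1-t) * (ε/2) :=
    mul_le_mul_of_nonneg_left hxa.le (by linarith [ht.2])
  have h2 : t * dist y b ≤ t * (ε/2) :=
    mul_le_mul_of_nonneg_left hyb.le ht.1
  nlinarith

lemma sigma_self {X : Type*} [MetricSpace X] {σ : X → X → ℝ → X}
    (hσ : IsConicalBicombing σ) (z : X) {t : ℝ} (ht : t ∈ Icc (0:ℝ) 1) : σ z z t = z := by
  have h := hσ.2.2.1 z z t ht 0 (by simp)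
  rw [dist_self, mul_zero, hσ.1] at h
  exact dist_eq_zero.1 h

lemma dist_sigma_half {X : Type*} [MetricSpace X] {σ : X → X → ℝ → X}
    (hσ : IsConicalBicombing σ) (z x y : X) :
    dist z (σ x y (1/2)) ≤ 1/2 * dist z x + 1/2 * dist z y := by
  have ht : (1/2:ℝ) ∈ Icc (0:ℝ) 1 := by constructor <;> norm_num
  have := hσ.2.2.2 z x z y (1/2) ht
  rw [sigma_self hσ z ht] at this
  linarith

lemma exists_avg {X : Type*} [MetricSpace X] {σ : X → X → ℝ → X}
    (hσ : IsConicalBicombing σ) (M : Set (X → X)) (hequiv : ∀ s ∈ M, SigmaEquivariant σ s)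
    (T : Finset (X → X)) (hT : T.Nonempty) :
    ∃ c : ℝ, 0 < c ∧ c ≤ 1 ∧ ∃ P : X → X,
      (∀ W : Set X, SCvx σ W → ∀ x, (∀ t ∈ T, t x ∈ W) → P x ∈ W) ∧
      (∀ s ∈ M, ∀ z x : X, ∀ D η : ℝ, η ≤ D → (∀ t ∈ T, dist z (s (t x)) ≤ D) →
        (∃ t ∈ T, dist z (s (t x)) ≤ η) → dist z (s (P x)) ≤ D - c * (D - η)) := by
  have hh : (1/2:ℝ) ∈ Icc (0:ℝ) 1 := by constructor <;> norm_num
  induction hT using Finset.Nonempty.cons_induction with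
  | singleton a =>
    refine ⟨1, one_pos, le_rfl, a, ?_, ?_⟩
    · intro W _ x h; exact h a (by simp)
    · rintro s hs z x D η _ _ ⟨t, ht, h⟩
      rw [Finset.mem_singleton] at ht
      subst ht; linarith
  | cons a T ha hT ih =>
    obtain ⟨c, hc, hc1, P, h1, h2⟩ := ih
    refine ⟨c/2, by positivity, by linarith, fun x => σ (a x) (P x) (1/2), ?_, ?_⟩
    · intro W hW x h
      exact hW _ (h a (by simp)) _ (h1 W hW x fun t ht => h t (by simp [ht])) _ hh
    · rintro s hs z x D η hη hD ⟨t, ht, h⟩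
      simp only
      rw [hequiv s hs _ _ _ hh]
      have h3 := dist_sigma_half hσ z (s (a x)) (s (P x))
      have hD' : ∀ t ∈ T, dist z (s (t x)) ≤ D := fun t ht => hD t (by simp [ht])
      have ha' := hD a (by simp)
      rcases Finset.mem_cons.1 ht with rfl | ht
      · obtain ⟨t', ht'⟩ := hT
        have := h2 s hs z x D D le_rfl hD' ⟨t', ht', hD' _ ht'⟩
        nlinarith [mul_nonneg (sub_nonneg.2 hc1) (sub_nonneg.2 hη)]
      · have := h2 s hs z x D η hη hD' ⟨t, ht, h⟩
        nlinarith

lemma sup_net {X : Type*} [MetricSpace X] (M : Set (X → X)) (hid : id ∈ M)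
    (hlip : ∀ s ∈ M, LipschitzWith 1 s)
    (hcomp : ∀ s ∈ M, ∀ t ∈ M, s ∘ t ∈ M) (p : X)
    (htb : ∀ ε > 0, ∃ T : Set (X → X), T.Finite ∧ T ⊆ M ∧
      ∀ s ∈ M, ∃ t ∈ T, dist (s p) (t p) ≤ ε) (ε : ℝ) (hε : 0 < ε) :
    ∃ T : Finset (X → X), T.Nonempty ∧ ↑T ⊆ M ∧
      ∀ s ∈ M, ∃ t ∈ T, ∀ a ∈ M, dist (s (a p)) (t (a p)) ≤ ε := by
  obtain ⟨T0, hfin, hT0, hnet⟩ := htb (ε/4) (by positivity)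
  have : Finite T0 := hfin
  choose! n hn hn' using hnet
  let φ : M → (T0 → T0) := fun s h => ⟨n (s.1 ∘ h.1), hn _ (hcomp _ s.2 _ (hT0 h.2))⟩
  let rep : range φ → (X → X) := fun c => (c.2.choose).1
  have hf : (range rep).Finite := finite_range rep
  have hl : ∀ s ∈ M, ∀ x y, dist (s x) (s y) ≤ dist x y := by
    intro s hs x y
    simpa using (hlip s hs).dist_le_mul x y
  have key : ∀ s ∈ M, ∃ t ∈ hf.toFinset, ∀ a ∈ M, dist (s (a p)) (t (a p)) ≤ ε := by
    intro s hs
    let c : range φ := ⟨φ ⟨s, hs⟩, mem_range_self _⟩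
    refine ⟨rep c, by simp, ?_⟩
    intro a ha
    have ht : rep c ∈ M := (c.2.choose).2
    have hc : φ c.2.choose = φ ⟨s, hs⟩ := c.2.choose_spec
    have h0 := hn' a ha
    set h := n a with hh
    have hhT : h ∈ T0 := hn a ha
    have e : n (rep c ∘ h) = n (s ∘ h) := by
      have := congrFun hc ⟨h, hhT⟩
      exact congrArg Subtype.val this
    have h1 := hn' (s ∘ h) (hcomp _ hs _ (hT0 hhT))
    have h2 := hn' (rep c ∘ h) (hcomp _ ht _ (hT0 hhT))
    rw [e] at h2
    simp only [Function.comp_apply] at h1 h2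
    have h3 := hl s hs (a p) (h p)
    have h4 := hl _ ht (a p) (h p)
    have h5 := dist_triangle4 (s (a p)) (s (h p)) (rep c (h p)) (rep c (a p))
    have h6 := dist_triangle_right (s (h p)) (rep c (h p)) (n (s ∘ h) p)
    rw [dist_comm (rep c (h p)) (rep c (a p))] at h5
    linarith
  refine ⟨hf.toFinset, ?_, ?_, key⟩
  · obtain ⟨t, ht, _⟩ := key id hid
    exact ⟨t, ht⟩
  · intro t ht
    simp only [Finite.coe_toFinset] at ht
    obtain ⟨c, rfl⟩ := ht
    exact (c.2.choose).2

lemma fixed_of_tb {X : Type*} [MetricSpace X] [CompleteSpace X] {σ : X → X → ℝ → X}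
    (hσ : IsConicalBicombing σ) (M : Set (X → X)) (hid : id ∈ M)
    (hequiv : ∀ s ∈ M, SigmaEquivariant σ s)
    (hlip : ∀ s ∈ M, LipschitzWith 1 s)
    (hcomp : ∀ s ∈ M, ∀ t ∈ M, s ∘ t ∈ M)
    (hrev : ∀ s ∈ M, ∀ t ∈ M, ∃ a ∈ M, ∃ b ∈ M, s ∘ a = t ∘ b) (p : X)
    (htb : ∀ ε > 0, ∃ T : Set (X → X), T.Finite ∧ T ⊆ M ∧
      ∀ s ∈ M, ∃ t ∈ T, dist (s p) (t p) ≤ ε)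
    (C : ℝ) (hC : 0 < C) (hbd : ∀ s ∈ M, ∀ t ∈ M, dist (s p) (t p) ≤ C) :
    ∃ xs ∈ closure (convSigma σ ((fun s : X → X => s p) '' M)), ∀ s ∈ M, s xs = xs := by
  have hl : ∀ s ∈ M, ∀ x y, dist (s x) (s y) ≤ dist x y := by
    intro s hs x y
    simpa using (hlip s hs).dist_le_mul x y
  set Y := convSigma σ ((fun s : X → X => s p) '' M) with hY
  have hYc : SCvx σ Y := convSigma_SCvx hσ _
  have hYinv : ∀ x ∈ Y, ∀ s ∈ M, s x ∈ Y := by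
    have : Y ⊆ {x | ∀ s ∈ M, s x ∈ Y} := by
      apply convSigma_min
      · rintro _ ⟨a, ha, rfl⟩ s hs
        exact subset_convSigma ⟨s ∘ a, hcomp s hs a ha, rfl⟩
      · intro x hx y hy t ht s hs
        rw [hequiv s hs _ _ _ ht]
        exact hYc _ (hx s hs) _ (hy s hs) t ht
    exact this
  have hnet : ∀ ε > 0, ∃ T : Finset (X → X), T.Nonempty ∧ ↑T ⊆ M ∧
      ∀ s ∈ M, ∃ t ∈ T, ∀ q ∈ Y, dist (s q) (t q) ≤ ε := by
    intro ε hε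
    obtain ⟨T, h1, h2, h3⟩ := sup_net M hid hlip hcomp p htb ε hε
    refine ⟨T, h1, h2, fun s hs => ?_⟩
    obtain ⟨t, ht, h⟩ := h3 s hs
    refine ⟨t, ht, ?_⟩
    have : Y ⊆ {q | dist (s q) (t q) ≤ ε} := by
      apply convSigma_min
      · rintro _ ⟨a, ha, rfl⟩; exact h a ha
      · intro x hx y hy r hr
        simp only [mem_setOf_eq] at *
        rw [hequiv s hs _ _ _ hr, hequiv t (h2 ht) _ _ _ hr]
        have := hσ.2.2.2 (s x) (t x) (s y) (t y) r hr
        nlinarith [mul_le_mul_of_nonneg_left hx (sub_nonneg.2 hr.2),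
          mul_le_mul_of_nonneg_left hy hr.1]
    exact this
  -- improvement step
  have step : ∀ x ∈ Y, ∀ u : ℝ, 0 < u → (∀ s ∈ M, ∀ t ∈ M, dist (s x) (t x) ≤ u) →
      ∀ ε > 0, ∃ y ∈ Y, dist x y ≤ u ∧ ∀ s ∈ M, ∀ t ∈ M, dist (s y) (t y) ≤ ε := by
    intro x hx u hu hux ε hε
    obtain ⟨T, hTne, hTM, hT⟩ := hnet (ε/4) (by positivity)
    obtain ⟨c, hc, hc1, P, hP1, hP2⟩ := exists_avg hσ M hequiv T hTne
    have iter : ∀ n : ℕ, ∃ y ∈ Y, (∀ s ∈ M, dist x (s y) ≤ u) ∧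
        ∀ s ∈ M, ∀ t ∈ M, dist (s y) (t y) ≤ ε/2 + (1 - c*c)^n * u := by
      intro n
      induction n with
      | zero =>
        refine ⟨x, hx, fun s hs => hux id hid s hs, fun s hs t ht => ?_⟩
        have := hux s hs t ht
        simp only [pow_zero, one_mul]
        linarith
      | succ n ih =>
        obtain ⟨y, hy, h1, h2⟩ := ih
        refine ⟨P y, hP1 Y hYc y fun t ht => hYinv y hy t (hTM ht), ?_, ?_⟩
        · intro s hs
          have h3 : ∀ t ∈ T, dist x (s (t y)) ≤ u := fun t ht => h1 _ (hcomp s hs t (hTM ht))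
          obtain ⟨t, ht⟩ := hTne
          have := hP2 s hs x y u u le_rfl h3 ⟨t, ht, h3 t ht⟩
          linarith
        · intro s hs t ht
          set D := ε/2 + (1 - c*c)^n * u with hD
          have hcc : 0 ≤ 1 - c*c := by nlinarith
          have hDη : ε/2 ≤ D := by
            have : 0 ≤ (1 - c*c)^n * u := by positivity
            linarith
          obtain ⟨a, ha, b, hb, hab⟩ := hrev s hs t ht
          obtain ⟨i, hi, hi'⟩ := hT a ha
          obtain ⟨j, hj, hj'⟩ := hT b hb
          have hall : ∀ j ∈ T, ∀ i ∈ T, dist (t (j y)) (s (i y)) ≤ D := fun j hj i hi =>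
            h2 _ (hcomp t ht j (hTM hj)) _ (hcomp s hs i (hTM hi))
          have hij : dist (t (j y)) (s (i y)) ≤ ε/2 := by
            have e1 := hl t ht (b y) (j y)
            have e2 := hl s hs (a y) (i y)
            have e3 : s (a y) = t (b y) := congrFun hab y
            have := hi' y hy
            have := hj' y hy
            have := dist_triangle_left (t (j y)) (s (i y)) (t (b y))
            rw [e3] at e2
            linarith
          have g1 : ∀ j ∈ T, dist (s (P y)) (t (j y)) ≤ D := by
            intro j hj
            have := hP2 s hs (t (j y)) y D D le_rfl (hall j hj) ⟨i, hi, hall j hj i hi⟩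
            rw [dist_comm]; linarith
          have g2 : dist (s (P y)) (t (j y)) ≤ D - c * (D - ε/2) := by
            rw [dist_comm]
            exact hP2 s hs (t (j y)) y D (ε/2) hDη (hall j hj) ⟨i, hi, hij⟩
          have g3 := hP2 t ht (s (P y)) y D (D - c * (D - ε/2))
            (by nlinarith) g1 ⟨j, hj, g2⟩
          calc _ ≤ _ := g3
            _ = ε/2 + (1 - c*c)^(n+1) * u := by rw [hD]; ring
    have hlim : Tendsto (fun n : ℕ => (1 - c*c)^n * u) atTop (𝓝 (0 * u)) :=
      (tendsto_pow_atTop_nhds_zero_of_lt_one (by nlinarith) (by nlinarith)).mul_const u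
    rw [zero_mul] at hlim
    obtain ⟨n, hn⟩ := (hlim.eventually (gt_mem_nhds (show (0:ℝ) < ε/2 by positivity))).exists
    obtain ⟨y, hy, h1, h2⟩ := iter n
    refine ⟨y, hy, h1 id hid, fun s hs t ht => ?_⟩
    have := h2 s hs t ht
    linarith
  -- the sequence
  let Q : ℕ → X → Prop := fun n x => x ∈ Y ∧ ∀ s ∈ M, ∀ t ∈ M, dist (s x) (t x) ≤ C * (1/2)^n
  have hQ : ∀ n x, Q n x → ∃ y, Q (n+1) y ∧ dist x y ≤ C * (1/2)^n := by
    intro n x hx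
    obtain ⟨y, hy, h1, h2⟩ := step x hx.1 (C * (1/2)^n) (by positivity) hx.2
      (C * (1/2)^(n+1)) (by positivity)
    exact ⟨y, ⟨hy, h2⟩, h1⟩
  choose! nx hnx1 hnx2 using hQ
  let y : ℕ → X := fun n => Nat.rec p (fun n x => nx n x) n
  have hy : ∀ n, Q n (y n) := by
    intro n
    induction n with
    | zero => exact ⟨subset_convSigma ⟨id, hid, rfl⟩, fun s hs t ht => by
        rw [pow_zero, mul_one]; exact hbd s hs t ht⟩
    | succ n ih => exact hnx1 n _ ih
  have hcau : CauchySeq y := by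
    apply cauchySeq_of_le_geometric (1/2) C (by norm_num)
    intro n
    exact hnx2 n _ (hy n)
  obtain ⟨xs, hxs⟩ := cauchySeq_tendsto_of_complete hcau
  refine ⟨xs, mem_closure_of_tendsto hxs (Eventually.of_forall fun n => (hy n).1), ?_⟩
  intro s hs
  have h1 : Tendsto (fun n => dist (s (y n)) (y n)) atTop (𝓝 (dist (s xs) xs)) :=
    (((hlip s hs).continuous.tendsto xs).comp hxs).dist hxs
  have h2 : Tendsto (fun n : ℕ => C * (1/2:ℝ)^n) atTop (𝓝 (C * 0)) :=
    (tendsto_pow_atTop_nhds_zero_of_lt_one (by norm_num) (by norm_num)).const_mul C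
  have h3 : dist (s xs) xs ≤ C * 0 := le_of_tendsto_of_tendsto' h1 h2
    fun n => (hy n).2 s hs id hid
  rw [mul_zero] at h3
  exact dist_le_zero.1 h3

open Classical in
lemma card_shift {X : Type*} [DecidableEq (X → X)] (F : Finset (X → X)) (s : X → X) (y : X)
    (E E' : Set X) (hE : ∀ z ∈ E, s z ∈ E') :
    (F.filter (fun h => h y ∈ E)).card ≤ (F.filter (fun h => h y ∈ E')).card +
      (symmDiff (F.image (fun h => s ∘ h)) F).card := by
  set f : (X → X) → (X → X) := fun h => s ∘ h with hf
  set G := F.filter (fun h => h y ∈ E) with hG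
  set G' := F.filter (fun h => h y ∈ E') with hG'
  have hGF : G ⊆ F := Finset.filter_subset _ _
  have h1 : (F.image f).card ≤ (G.image f).card + (F \ G).card := by
    calc (F.image f).card ≤ (G.image f ∪ (F \ G).image f).card := by
          rw [← Finset.image_union, Finset.union_sdiff_of_subset hGF]
      _ ≤ _ := (Finset.card_union_le _ _).trans (Nat.add_le_add_left Finset.card_image_le _)
  have h2 : (F \ G).card + G.card = F.card := Finset.card_sdiff_add_card_eq_card hGF
  have h3 : (G.image f).card ≤ G'.card + (F.image f \ F).card := by
    refine (Finset.card_le_card ?_).trans (Finset.card_union_le _ _)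
    intro g hg
    obtain ⟨h, hh, rfl⟩ := Finset.mem_image.1 hg
    rw [hG, Finset.mem_filter] at hh
    by_cases hF : f h ∈ F
    · exact Finset.mem_union_left _ (Finset.mem_filter.2 ⟨hF, hE _ hh.2⟩)
    · exact Finset.mem_union_right _
        (Finset.mem_sdiff.2 ⟨Finset.mem_image_of_mem _ hh.1, hF⟩)
  have h4 : F.card ≤ (F.image f).card + (F \ F.image f).card := by
    have := Finset.le_card_sdiff (F.image f) F
    omega
  have h5 : (symmDiff (F.image f) F).card = (F.image f \ F).card + (F \ F.image f).card := by
    rw [symmDiff_def, Finset.sup_eq_union, Finset.card_union_of_disjoint]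
    exact disjoint_sdiff_sdiff
  omega

theorem fixed_point_of_folner_semigroup_of_lipschitz_maps
    {X : Type*} [MetricSpace X] [CompleteSpace X] [DecidableEq (X → X)]
    (σ : X → X → ℝ → X) (hσ : IsConicalBicombing σ) (hmid : MidpointProp σ)
    (S : Set (X → X)) (hcount : S.Countable)
    (hlip : ∀ s ∈ S, LipschitzWith 1 s)
    (hcomp : ∀ s ∈ S, ∀ t ∈ S, s ∘ t ∈ S)
    (hequiv : ∀ s ∈ S, SigmaEquivariant σ s)
    (F : ℕ → Finset (X → X)) (hFS : ∀ k, ↑(F k) ⊆ S) (hFne : ∀ k, (F k).Nonempty)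
    (hFolner : ∀ s ∈ S, Filter.Tendsto
      (fun k => ((symmDiff ((F k).image (fun h => s ∘ h)) (F k)).card : ℝ) / (F k).card)
      Filter.atTop (nhds 0))
    (x₀ : X) (K₀ : Set X) (hK₀ : IsCompact K₀)
    (hbdd : Bornology.IsBounded ((fun s : X → X => s x₀) '' S))
    (hpos : 0 < Filter.atTop.limsup (fun k : ℕ =>
      ⨆ s ∈ S, (∑ h ∈ F k, K₀.indicator (fun _ => (1:ℝ)) (h (s x₀))) / (F k).card)) :
    ∃ xs ∈ closure (convSigma σ ((fun s : X → X => s x₀) '' S)),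
      ∀ s ∈ S, s xs = xs := by
  classical
  have hFpos : ∀ k, (0:ℝ) < (F k).card := fun k => by exact_mod_cast (hFne k).card_pos
  -- reversibility
  have hrev : ∀ s ∈ S, ∀ t ∈ S, ∃ a ∈ S, ∃ b ∈ S, s ∘ a = t ∘ b := by
    intro s hs t ht
    have e1 := (hFolner s hs).eventually (gt_mem_nhds (show (0:ℝ) < 1/4 by norm_num))
    have e2 := (hFolner t ht).eventually (gt_mem_nhds (show (0:ℝ) < 1/4 by norm_num))
    obtain ⟨k, h1, h2⟩ := (e1.and e2).exists
    rw [div_lt_iff₀ (hFpos k)] at h1 h2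
    by_contra hcon
    have hsub : F k ⊆ symmDiff ((F k).image (fun h => s ∘ h)) (F k) ∪
        symmDiff ((F k).image (fun h => t ∘ h)) (F k) := by
      intro g hg
      by_contra hg'
      rw [Finset.mem_union, Finset.mem_symmDiff, Finset.mem_symmDiff] at hg'
      have i1 : g ∈ (F k).image (fun h => s ∘ h) := by tauto
      have i2 : g ∈ (F k).image (fun h => t ∘ h) := by tauto
      obtain ⟨a, ha, rfl⟩ := Finset.mem_image.1 i1
      obtain ⟨b, hb, hab⟩ := Finset.mem_image.1 i2
      exact hcon ⟨a, hFS k ha, b, hFS k hb, hab.symm⟩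
    have h3 := (Finset.card_le_card hsub).trans (Finset.card_union_le _ _)
    have h3' : ((F k).card : ℝ) ≤ (symmDiff ((F k).image (fun h => s ∘ h)) (F k)).card +
        (symmDiff ((F k).image (fun h => t ∘ h)) (F k)).card := by exact_mod_cast h3
    linarith [hFpos k]
  -- counting
  let f : ℕ → (X → X) → Set X → ℝ := fun k s E =>
    (((F k).filter (fun h => h (s x₀) ∈ E)).card : ℝ) / (F k).card
  have hf_eq : ∀ k s, (∑ h ∈ F k, K₀.indicator (fun _ => (1:ℝ)) (h (s x₀))) / (F k).card
      = f k s K₀ := by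
    intro k s
    simp only [f]
    congr 1
    simp [Set.indicator_apply, Finset.sum_ite]
  have hf0 : ∀ k s E, 0 ≤ f k s E := fun k s E => by positivity
  obtain ⟨c, hc, hfreq⟩ : ∃ c : ℝ, 0 < c ∧ ∃ᶠ k in atTop, ∃ s ∈ S, c < f k s K₀ := by
    obtain ⟨c, hc, hc'⟩ := exists_between hpos
    refine ⟨c, hc, ?_⟩
    have hco : IsCoboundedUnder (· ≤ ·) atTop (fun k : ℕ =>
      ⨆ s ∈ S, (∑ h ∈ F k, K₀.indicator (fun _ => (1:ℝ)) (h (s x₀))) / (F k).card) := by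
      apply IsBoundedUnder.isCoboundedUnder_le
      refine isBoundedUnder_of ⟨0, fun k => ?_⟩
      apply Real.iSup_nonneg
      intro s
      apply Real.iSup_nonneg
      intro _
      rw [hf_eq]; exact hf0 _ _ _
    refine (frequently_lt_of_lt_limsup hco hc').mono ?_
    intro k hk
    haveI : Nonempty (X → X) := ⟨id⟩
    obtain ⟨s, hs⟩ := exists_lt_of_lt_ciSup hk
    by_cases hsS : s ∈ S
    · rw [ciSup_pos hsS, hf_eq] at hs
      exact ⟨s, hsS, hs⟩
    · exfalso
      haveI : IsEmpty (s ∈ S) := ⟨hsS⟩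
      rw [Real.iSup_of_isEmpty] at hs
      linarith
  -- ultrafilter
  obtain ⟨U, hU⟩ : ∃ U : Ultrafilter ℕ, (U : Filter ℕ) ≤
      atTop ⊓ 𝓟 {k | ∃ s ∈ S, c < f k s K₀} := by
    haveI : NeBot (atTop ⊓ 𝓟 {k | ∃ s ∈ S, c < f k s K₀}) := by
      rw [← frequently_mem_iff_neBot]; exact hfreq
    exact Ultrafilter.exists_le _
  have hUtop : (U : Filter ℕ) ≤ atTop := hU.trans inf_le_left
  have hUc : ∀ᶠ k in (U : Filter ℕ), ∃ s ∈ S, c < f k s K₀ :=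
    (hU.trans inf_le_right) (mem_principal_self _)
  obtain ⟨s₀, hs₀⟩ : S.Nonempty := ⟨_, hFS 0 (hFne 0).choose_spec⟩
  let w : ℕ → (X → X) := fun k => if h : ∃ s ∈ S, c < f k s K₀ then h.choose else s₀
  have hwS : ∀ k, w k ∈ S := by
    intro k
    simp only [w]
    split_ifs with h
    · exact h.choose_spec.1
    · exact hs₀
  have hwc : ∀ᶠ k in (U : Filter ℕ), c < f k (w k) K₀ := by
    filter_upwards [hUc] with k h
    have : w k = h.choose := dif_pos h
    rw [this]
    exact h.choose_spec.2
  have hfmono : ∀ k s E E', E ⊆ E' → f k s E ≤ f k s E' := by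
    intro k s E E' h
    refine div_le_div_of_nonneg_right ?_ (hFpos k).le
    exact_mod_cast Finset.card_le_card (Finset.monotone_filter_right _ (fun g _ hg => h hg))
  -- support point
  obtain ⟨p, hpK, hp⟩ : ∃ p ∈ K₀, ∀ ε > 0, ∃ δ > 0,
      ∀ᶠ k in (U : Filter ℕ), δ ≤ f k (w k) (Metric.ball p ε) := by
    by_contra hcon
    push Not at hcon
    have : ∀ δ > 0, ∀ᶠ k in (U : Filter ℕ), f k (w k) K₀ < δ := by
      refine hK₀.induction_on (p := fun E => ∀ δ > 0, ∀ᶠ k in (U : Filter ℕ), f k (w k) E < δ)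
        ?_ ?_ ?_ ?_
      · intro δ hδ
        refine Eventually.of_forall fun k => ?_
        simpa [f] using hδ
      · intro E E' hE h δ hδ
        filter_upwards [h δ hδ] with k hk
        exact (hfmono _ _ _ _ hE).trans_lt hk
      · intro E E' h h' δ hδ
        filter_upwards [h (δ/2) (by positivity), h' (δ/2) (by positivity)] with k hk hk'
        have : f k (w k) (E ∪ E') ≤ f k (w k) E + f k (w k) E' := by
          simp only [f]
          rw [← add_div]
          refine div_le_div_of_nonneg_right ?_ (hFpos k).le
          norm_cast
          refine (Finset.card_le_card ?_).trans (Finset.card_union_le _ _)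
          intro g
          simp only [Finset.mem_filter, Finset.mem_union, Set.mem_union]
          tauto
        linarith
      · intro q hq
        obtain ⟨ε, hε, h⟩ := hcon q hq
        refine ⟨Metric.ball q ε, mem_nhdsWithin_of_mem_nhds (Metric.ball_mem_nhds q hε), ?_⟩
        intro δ hδ
        exact h δ hδ
    obtain ⟨k, h1, h2⟩ := (hwc.and (this c hc)).exists
    linarith
  have hl : ∀ s ∈ S, ∀ x y, dist (s x) (s y) ≤ dist x y := by
    intro s hs x y
    simpa using (hlip s hs).dist_le_mul x y
  set A := (fun s : X → X => s x₀) '' S with hA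
  have hpA : p ∈ closure A := by
    rw [Metric.mem_closure_iff]
    intro ε hε
    obtain ⟨δ, hδ, h⟩ := hp ε hε
    obtain ⟨k, hk⟩ := h.exists
    have hne : ((F k).filter (fun h => h (w k x₀) ∈ Metric.ball p ε)).Nonempty := by
      rw [Finset.nonempty_iff_ne_empty]
      intro h0
      simp only [f] at hk
      rw [h0] at hk
      simp at hk
      linarith
    obtain ⟨g, hg⟩ := hne
    rw [Finset.mem_filter] at hg
    refine ⟨g (w k x₀), ⟨g ∘ w k, hcomp _ (hFS k hg.1) _ (hwS k), rfl⟩, ?_⟩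
    rw [dist_comm]; exact hg.2
  -- total boundedness
  have htb : ∀ ε > 0, ∃ T : Finset (X → X), ↑T ⊆ S ∧
      ∀ s ∈ S, ∃ t ∈ T, dist (s p) (t p) ≤ ε := by
    intro ε hε
    by_contra hcon
    push Not at hcon
    obtain ⟨δ, hδ, hev⟩ := hp (ε/2) (by positivity)
    obtain ⟨r, hr1, hr2⟩ := exists_seq_of_forall_finset_exists (fun s : X → X => s ∈ S)
      (fun t s => ε < dist (s p) (t p)) (by
        intro T hT
        exact hcon T hT)
    have hshift : ∀ i, ∀ᶠ k in (U : Filter ℕ),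
        δ/2 ≤ f k (w k) (Metric.ball (r i p) (ε/2)) := by
      intro i
      have e1 := hUtop ((hFolner (r i) (hr1 i)).eventually
        (gt_mem_nhds (show (0:ℝ) < δ/2 by positivity)))
      filter_upwards [hev, e1] with k h1 h2
      have h3 := card_shift (F k) (r i) (w k x₀) (Metric.ball p (ε/2))
        (Metric.ball (r i p) (ε/2)) (fun z hz => (hl _ (hr1 i) z p).trans_lt hz)
      have h3' : f k (w k) (Metric.ball p (ε/2)) ≤ f k (w k) (Metric.ball (r i p) (ε/2)) +
          ((symmDiff ((F k).image (fun h => r i ∘ h)) (F k)).card : ℝ) / (F k).card := by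
        simp only [f]
        rw [← add_div]
        refine div_le_div_of_nonneg_right ?_ (hFpos k).le
        exact_mod_cast h3
      have h2' : ((symmDiff ((F k).image (fun h => r i ∘ h)) (F k)).card : ℝ) / (F k).card
        < δ/2 := h2
      linarith
    obtain ⟨n, hn⟩ := exists_nat_gt (2/δ)
    obtain ⟨k, hk⟩ := ((Finset.range n).eventually_all.2 (fun i _ => hshift i)).exists
    have hsum : ∑ i ∈ Finset.range n, f k (w k) (Metric.ball (r i p) (ε/2)) ≤ 1 := by
      simp only [f]
      rw [← Finset.sum_div, div_le_one (hFpos k), ← Nat.cast_sum, ← Finset.card_biUnion]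
      · exact_mod_cast Finset.card_le_card
          (Finset.biUnion_subset.2 fun i _ => Finset.filter_subset _ _)
      · have key : ∀ i j, i < j → Disjoint
            ((F k).filter (fun h => h (w k x₀) ∈ Metric.ball (r i p) (ε/2)))
            ((F k).filter (fun h => h (w k x₀) ∈ Metric.ball (r j p) (ε/2))) := by
          intro i j hij
          rw [Finset.disjoint_left]
          intro g h1 h2
          have h1 := Metric.mem_ball.1 (Finset.mem_filter.1 h1).2
          have h2 := Metric.mem_ball.1 (Finset.mem_filter.1 h2).2
          have := hr2 i j hij
          have := dist_triangle_left (r j p) (r i p) (g (w k x₀))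
          linarith
        intro i _ j _ hij
        rcases lt_or_gt_of_ne hij with h | h
        · exact key i j h
        · exact (key j i h).symm
    have hsum2 : ∑ i ∈ Finset.range n, δ/2 ≤
        ∑ i ∈ Finset.range n, f k (w k) (Metric.ball (r i p) (ε/2)) :=
      Finset.sum_le_sum hk
    rw [Finset.sum_const, Finset.card_range, nsmul_eq_mul] at hsum2
    rw [div_lt_iff₀ hδ] at hn
    linarith
  -- conclude
  set M : Set (X → X) := insert id S with hM
  have hcontA : ∀ s ∈ S, s p ∈ closure A := by
    intro s hs
    refine (map_mem_closure (hlip s hs).continuous hpA ?_)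
    rintro _ ⟨a, ha, rfl⟩
    exact ⟨s ∘ a, hcomp s hs a ha, rfl⟩
  have hMA : ∀ s ∈ M, s p ∈ closure A := by
    rintro s (rfl | hs)
    · exact hpA
    · exact hcontA s hs
  obtain ⟨C, hCb⟩ := Metric.isBounded_iff.1 hbdd.closure
  obtain ⟨xs, hxs, hfix⟩ := fixed_of_tb hσ M (mem_insert _ _)
    (by
      rintro s (rfl | hs)
      · intro x y t _; rfl
      · exact hequiv s hs)
    (by
      rintro s (rfl | hs)
      · exact LipschitzWith.id
      · exact hlip s hs)
    (by
      rintro s (rfl | hs) t (rfl | ht)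
      · exact mem_insert _ _
      · exact Or.inr ht
      · exact Or.inr hs
      · exact Or.inr (hcomp s hs t ht))
    (by
      rintro s (rfl | hs) t (rfl | ht)
      · exact ⟨id, mem_insert _ _, id, mem_insert _ _, rfl⟩
      · exact ⟨t, Or.inr ht, id, mem_insert _ _, rfl⟩
      · exact ⟨id, mem_insert _ _, s, Or.inr hs, rfl⟩
      · obtain ⟨a, ha, b, hb, h⟩ := hrev s hs t ht
        exact ⟨a, Or.inr ha, b, Or.inr hb, h⟩)
    p
    (by
      intro ε hε
      obtain ⟨T, hT, h⟩ := htb ε hε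
      refine ⟨insert id T, T.finite_toSet.insert id, insert_subset_insert hT, ?_⟩
      rintro s (rfl | hs)
      · exact ⟨id, mem_insert _ _, by simpa using hε.le⟩
      · obtain ⟨t, ht, h'⟩ := h s hs
        exact ⟨t, Or.inr ht, h'⟩)
    (max C 1) (by positivity)
    (fun s hs t ht => (hCb (hMA s hs) (hMA t ht)).trans (le_max_left _ _))
  refine ⟨xs, ?_, fun s hs => hfix s (Or.inr hs)⟩
  have hsub : convSigma σ ((fun s : X → X => s p) '' M) ⊆ closure (convSigma σ A) := by
    apply convSigma_min
    · rintro _ ⟨s, hs, rfl⟩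
      exact closure_mono subset_convSigma (hMA s hs)
    · exact closure_SCvx hσ (convSigma_SCvx hσ A)
  exact closure_minimal hsub isClosed_closure hxs
end

section
/- Let (X,d) be a metric space and let φ : X → X be an isometry. If there is a point x₀ ∈ X and a bounded subset B ⊆ X such that limsup_{k→∞} ( sup_{l≥0} (1/k) Σ_{i=0}^{k−1} 1_B(φ^{i+l}(x₀)) ) > 0, where 1_B is the indicator function of B, then the orbit {φ^k(x₀) : k ≥ 0} is a bounded subset of X. -/
theorem orbit_bounded_of_positive_upper_banach_density
    {X : Type*} [MetricSpace X]
    (φ : X → X) (hiso : Isometry φ) (hsurj : Function.Surjective φ)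
    (x₀ : X) (B : Set X) (hB : Bornology.IsBounded B)
    (hrec : 0 < Filter.atTop.limsup (fun k : ℕ =>
      ⨆ l : ℕ, (∑ i ∈ Finset.range k,
        B.indicator (fun _ => (1:ℝ)) (φ^[i + l] x₀)) / k)) :
    Bornology.IsBounded (Set.range fun k : ℕ => φ^[k] x₀) := by
  classical
  have hit : ∀ n : ℕ, Isometry (φ^[n]) := by
    intro n
    induction n with
    | zero => exact isometry_id
    | succ n ih => exact ih.comp hiso
  obtain ⟨D, hD⟩ := Metric.isBounded_iff.1 hB
  obtain ⟨c, hc0, hc⟩ := exists_between hrec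
  have hfreq := Filter.frequently_lt_of_lt_limsup (by
    apply Filter.IsBoundedUnder.isCoboundedUnder_le
    refine Filter.isBoundedUnder_of ⟨0, fun k => ?_⟩
    refine Real.iSup_nonneg fun l => ?_
    exact div_nonneg (Finset.sum_nonneg fun i _ =>
      Set.indicator_nonneg (fun _ _ => zero_le_one) _) (Nat.cast_nonneg _)) hc
  by_contra hunb
  have hfar : ∀ R : ℝ, ∃ n : ℕ, R < dist (φ^[n] x₀) x₀ := by
    intro R
    by_contra! h
    apply hunb
    refine (Metric.isBounded_closedBall (x := x₀) (r := R)).subset ?_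
    rintro _ ⟨n, rfl⟩
    exact h n
  have hF : ∀ m : ℕ, ∃ F : Finset ℕ, F.card = m ∧
      ∀ a ∈ F, ∀ b ∈ F, a ≠ b → D < dist (φ^[a] x₀) (φ^[b] x₀) := by
    intro m
    induction m with
    | zero => exact ⟨∅, by simp⟩
    | succ m ih =>
      obtain ⟨F, hcard, hF⟩ := ih
      obtain ⟨n, hn⟩ := hfar (|D| + ∑ a ∈ F, dist (φ^[a] x₀) x₀)
      have key : ∀ a ∈ F, |D| < dist (φ^[n] x₀) (φ^[a] x₀) := by
        intro a ha
        have h1 := Finset.single_le_sum (f := fun a => dist (φ^[a] x₀) x₀)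
          (fun _ _ => dist_nonneg) ha
        have h2 := dist_triangle (φ^[n] x₀) (φ^[a] x₀) x₀
        linarith
      have hnF : n ∉ F := fun h => by
        have := key n h
        rw [dist_self] at this
        exact absurd this (not_lt.2 (abs_nonneg _))
      refine ⟨insert n F, by rw [Finset.card_insert_of_notMem hnF, hcard], ?_⟩
      intro a ha b hb hab
      rw [Finset.mem_insert] at ha hb
      rcases ha with rfl | ha <;> rcases hb with rfl | hb
      · exact absurd rfl hab
      · exact (le_abs_self D).trans_lt (key b hb)
      · rw [dist_comm]; exact (le_abs_self D).trans_lt (key a ha)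
      · exact hF a ha b hb hab
  obtain ⟨m, hm⟩ := exists_nat_gt (2 / c)
  obtain ⟨F, hcard, hF⟩ := hF m
  obtain ⟨k, hk, hkN⟩ := (hfreq.and_eventually (Filter.eventually_gt_atTop (F.sup id))).exists
  obtain ⟨l, hl⟩ := exists_lt_of_lt_ciSup hk
  have hkpos : (0:ℝ) < k := by exact_mod_cast (Nat.zero_le _).trans_lt hkN
  rw [lt_div_iff₀ hkpos] at hl
  set T := (Finset.range k).filter (fun i => φ^[i + l] x₀ ∈ B) with hT
  have hsum : ∑ i ∈ Finset.range k, B.indicator (fun _ => (1:ℝ)) (φ^[i + l] x₀) = T.card := by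
    simp [Set.indicator_apply, hT]
  rw [hsum] at hl
  have hinj : (F ×ˢ T).card ≤ (Finset.range (k + k)).card := by
    apply Finset.card_le_card_of_injOn (fun p => p.1 + p.2)
    · rintro ⟨a, s⟩ h
      simp only [Finset.coe_product, Set.mem_prod, Finset.mem_coe, hT, Finset.mem_filter,
        Finset.mem_range] at h ⊢
      have : a ≤ F.sup id := Finset.le_sup (f := id) h.1
      omega
    · rintro ⟨a, s⟩ h ⟨b, t⟩ h' hEq
      simp only [Finset.coe_product, Set.mem_prod, Finset.mem_coe, hT, Finset.mem_filter,
        Finset.mem_range] at h h' hEq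
      by_cases hab : a = b
      · subst hab; simp at hEq; simp [hEq]
      · exfalso
        have h1 := hF a h.1 b h'.1 hab
        have h2 := hD h'.2.2 h.2.2
        have e1 := (hit (s + l)).dist_eq (φ^[a] x₀) (φ^[b] x₀)
        have e2 := (hit b).dist_eq (φ^[t + l] x₀) (φ^[s + l] x₀)
        rw [← Function.iterate_add_apply, ← Function.iterate_add_apply] at e1 e2
        rw [show s + l + a = b + (t + l) by omega, show s + l + b = b + (s + l) by omega] at e1
        linarith
  rw [Finset.card_product, Finset.card_range, hcard] at hinj
  have hinj' : (m:ℝ) * T.card ≤ k + k := by exact_mod_cast hinj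
  rw [div_lt_iff₀ hc0] at hm
  have hmpos : (0:ℝ) ≤ m := Nat.cast_nonneg _
  nlinarith [mul_le_mul_of_nonneg_left hl.le hmpos, mul_lt_mul_of_pos_right hm hkpos]
end
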